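/- arXiv:2206.13931 — 2 statements merged into one kernel-verified Lean document; each statement's English description precedes it below -/
import Mathlib

section
/- Let t₀ ∈ {0, 4, 5} and t ≥ 1 be integers, and set T = t₀ + 9t. Suppose T² + 4 = M·r² with M ≥ 2 squarefree and r ≥ 1 (when t₀ = 0 one may instead suppose T² − 4 = M·r²), and let E = (T + r√M)/2, a unit of the ring of integers O_K of K = ℚ(√M). If E is not the cube of a unit of O_K, then 3 divides the class number of the imaginary quadratic field ℚ(√(−3M)). -/
/-!
Let `n` be the norm of the unit `E`, and let `e` be a cube root of `E`. The trace `e + n / e` is a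
root of `X ^ 3 - 3 n X - T`, which is irreducible because an integer root would make `E` a cube.
Its discriminant `-27 (T ^ 2 - 4 n)` is a square in `F = ℚ(√(-3M))`, so it generates a cyclic
cubic extension `L` of `F`. Since `E` is a unit, only primes above `3` can ramify in `L / F`, and
there `E` is locally a cube; hence `L / F` is unramified.

It remains to see that this forces `3 ∣ h(F)`, as in Hilbert's Satz 94. In an unramified extension
every Galois-stable ideal of `𝓞 L` is extended from `𝓞 F`. If `h(F)` were prime to `3`, the
principal ones would come from principal ideals of `𝓞 F`, and Hilbert 90 would write every unit of
`L` of norm one as `u / g u` with a unit `u`. The units of `F` have order prime to `3`, so this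
would make every unit of `L` a cube, which is absurd since `L` has positive unit rank.
-/

open NumberField Module Polynomial
open scoped IntermediateField

section GaloisDescent

open scoped TensorProduct Pointwise

variable {A B G : Type*} [CommRing A] [CommRing B] [Algebra A B] [Group G] [MulSemiringAction G B]

theorem span_range_sub_smul_eq_top {g : G} (hg : g ≠ 1)
    (hG : ∀ P : Ideal B, P.IsMaximal → P.inertia G = ⊥) :
    Ideal.span (Set.range fun x : B ↦ x - g • x) = ⊤ := by
  by_contra hne
  obtain ⟨P, hP, hle⟩ := Ideal.exists_le_maximal _ hne
  refine hg (Subgroup.mem_bot.1 (hG P hP ▸ fun x ↦ ?_))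
  rw [← neg_sub]
  exact P.neg_mem (hle (Ideal.subset_span ⟨x, rfl⟩))

variable [SMulCommClass G A B]

variable (A B) in
/-- The ring homomorphism `B ⊗[A] B → B`, `x ⊗ y ↦ x * g y`. Together these are the components of
the map `B ⊗[A] B → ∏ g : G, B` that is bijective exactly when `B / A` is Galois with group `G`. -/
noncomputable def twistedMul (g : G) : B ⊗[A] B →ₐ[A] B :=
  Algebra.TensorProduct.productMap (AlgHom.id A B) (MulSemiringAction.toAlgHom A B g)

@[simp]
theorem twistedMul_tmul (g : G) (x y : B) : twistedMul A B g (x ⊗ₜ y) = x * g • y := by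
  simp [twistedMul]

theorem exists_twistedMul_one_eq_one_and_eq_zero {g : G} (hg : g ≠ 1)
    (hG : ∀ P : Ideal B, P.IsMaximal → P.inertia G = ⊥) :
    ∃ t : B ⊗[A] B, twistedMul A B (1 : G) t = 1 ∧ twistedMul A B g t = 0 := by
  have hsurj : Function.Surjective (twistedMul A B (1 : G)) := fun x ↦ ⟨x ⊗ₜ 1, by simp⟩
  have htop : (RingHom.ker (twistedMul A B g)).map (twistedMul A B (1 : G)) = ⊤ := by
    rw [eq_top_iff, ← span_range_sub_smul_eq_top hg hG, Ideal.span_le]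
    rintro _ ⟨x, rfl⟩
    exact (Ideal.mem_map_iff_of_surjective _ hsurj).2
      ⟨1 ⊗ₜ x - (g • x) ⊗ₜ 1, by simp [RingHom.mem_ker], by simp⟩
  obtain ⟨t, ht, ht1⟩ := (Ideal.mem_map_iff_of_surjective _ hsurj).1
    (htop ▸ Submodule.mem_top : (1 : B) ∈ _)
  exact ⟨t, ht1, ht⟩

theorem exists_twistedMul_one_eq_one_and_forall_eq_zero [Finite G]
    (hG : ∀ P : Ideal B, P.IsMaximal → P.inertia G = ⊥) :
    ∃ t : B ⊗[A] B, twistedMul A B (1 : G) t = 1 ∧ ∀ g : G, g ≠ 1 → twistedMul A B g t = 0 := by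
  classical
  have := Fintype.ofFinite G
  choose t ht1 ht0 using fun g : {g : G // g ≠ 1} ↦
    exists_twistedMul_one_eq_one_and_eq_zero (A := A) g.2 hG
  refine ⟨∏ g, t g, by simp [map_prod, ht1], fun g hg ↦ ?_⟩
  rw [map_prod]
  exact Finset.prod_eq_zero (Finset.mem_univ ⟨g, hg⟩) (ht0 ⟨g, hg⟩)

theorem sum_twistedMul_mul_smul_mem_map_comap [Fintype G] [Algebra.IsInvariant A B G]
    {J : Ideal B} (hJ : ∀ g : G, g • J = J) {z : B} (hz : z ∈ J) (t : B ⊗[A] B) :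
    ∑ g : G, twistedMul A B g t * g • z ∈ (J.comap (algebraMap A B)).map (algebraMap A B) := by
  induction t with
  | zero => simp
  | add t u ht hu => simpa only [map_add, add_mul, Finset.sum_add_distrib] using add_mem ht hu
  | tmul x y =>
    have htrace : ∀ h : G, h • ∑ g : G, g • (y * z) = ∑ g : G, g • (y * z) := fun h ↦ by
      simp only [Finset.smul_sum, smul_smul]
      exact Fintype.sum_equiv (Equiv.mulLeft h) _ _ fun _ ↦ rfl
    obtain ⟨a, ha⟩ := Algebra.IsInvariant.isInvariant (A := A) _ htrace
    have ha_mem : a ∈ J.comap (algebraMap A B) := by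
      rw [Ideal.mem_comap, ha]
      exact sum_mem fun g _ ↦ by
        simpa only [hJ] using Ideal.smul_mem_pointwise_smul g _ J (J.mul_mem_left y hz)
    convert Ideal.mul_mem_left _ x (Ideal.mem_map_of_mem (algebraMap A B) ha_mem) using 1
    simp only [ha, Finset.mul_sum, twistedMul_tmul, smul_mul', mul_assoc]

-- Writing `t = ∑ xᵢ ⊗ yᵢ`, the identity `z = ∑ᵢ xᵢ * ∑_g g (yᵢ z)` expresses `z ∈ J` through
-- traces of elements of `J` (Chase, Harrison and Rosenberg).
theorem map_comap_eq_of_forall_inertia_eq_bot [Finite G] [Algebra.IsInvariant A B G]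
    (hG : ∀ P : Ideal B, P.IsMaximal → P.inertia G = ⊥)
    {J : Ideal B} (hJ : ∀ g : G, g • J = J) :
    (J.comap (algebraMap A B)).map (algebraMap A B) = J := by
  have := Fintype.ofFinite G
  obtain ⟨t, ht1, ht0⟩ := exists_twistedMul_one_eq_one_and_forall_eq_zero (A := A) hG
  refine le_antisymm Ideal.map_comap_le fun z hz ↦ ?_
  have hsum := sum_twistedMul_mul_smul_mem_map_comap hJ hz t
  rwa [Finset.sum_eq_single 1 (fun g _ hg ↦ by rw [ht0 g hg, zero_mul]) (by simp), ht1, one_mul,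
    one_smul] at hsum

end GaloisDescent

section UnramifiedCyclic

theorem isPrincipal_of_isPrincipal_map {A B : Type*} [CommRing A] [CommRing B]
    [IsDedekindDomain A] [IsDedekindDomain B] [Algebra A B] [Module.Finite A B]
    [Module.IsTorsionFree A B] [Fintype (ClassGroup A)]
    (hcop : (finrank A B).Coprime (Fintype.card (ClassGroup A))) {I : Ideal A}
    (hI : (I.map (algebraMap A B)).IsPrincipal) : I.IsPrincipal := by
  refine Ideal.IsPrincipal.of_isPrincipal_pow_of_coprime hcop ?_
  obtain ⟨b, hb⟩ := hI
  rw [← Ideal.relNorm_algebraMap, hb, Ideal.submodule_span_eq, Ideal.relNorm_singleton]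
  exact ⟨_, rfl⟩

variable {F L : Type} [Field F] [NumberField F] [Field L] [NumberField L] [Algebra F L]

open scoped Pointwise in
theorem exists_span_singleton_algebraMap_eq_of_smul_eq [IsGalois F L]
    (hG : ∀ P : Ideal (𝓞 L), P.IsMaximal → P.inertia Gal(L/F) = ⊥)
    (hcop : (finrank F L).Coprime (classNumber F)) {a : 𝓞 L}
    (ha : ∀ g : Gal(L/F), g • Ideal.span {a} = Ideal.span {a}) :
    ∃ b : 𝓞 F, Ideal.span {algebraMap (𝓞 F) (𝓞 L) b} = Ideal.span {a} := by
  have hmap := map_comap_eq_of_forall_inertia_eq_bot (A := 𝓞 F) hG ha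
  rw [IsFractionRing.finrank_eq (𝓞 F) F (𝓞 L) L] at hcop
  obtain ⟨b, hb⟩ := isPrincipal_of_isPrincipal_map hcop (by rw [hmap]; exact ⟨a, rfl⟩)
  refine ⟨b, ?_⟩
  rwa [hb, Ideal.submodule_span_eq, Ideal.map_span, Set.image_singleton] at hmap

open scoped Pointwise in
theorem exists_unit_mul_smul_eq_of_norm_eq_one [IsGalois F L]
    (hG : ∀ P : Ideal (𝓞 L), P.IsMaximal → P.inertia Gal(L/F) = ⊥)
    (hcop : (finrank F L).Coprime (classNumber F))
    {g : Gal(L/F)} (hg : ∀ x, x ∈ Subgroup.zpowers g)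
    {η : (𝓞 L)ˣ} (hη : RingOfIntegers.norm F (η : 𝓞 L) = 1) :
    ∃ u : (𝓞 L)ˣ, (η : 𝓞 L) * g • (u : 𝓞 L) = u := by
  have : IsCyclic Gal(L/F) := ⟨g, hg⟩
  obtain ⟨a, ha0, ha⟩ := groupCohomology.exists_mul_galRestrict_of_norm_eq_one (A := 𝓞 F)
    (η := (η : 𝓞 L)) hg (by rw [← RingOfIntegers.coe_norm, hη]; rfl)
  have hsmul : galRestrict (𝓞 F) F L (𝓞 L) g a = g • a :=
    RingOfIntegers.ext (algebraMap_galRestrict_apply (𝓞 F) g a)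
  rw [hsmul] at ha
  have hstable : ∀ h : Gal(L/F), h • Ideal.span {a} = Ideal.span {a} := by
    suffices g ∈ MulAction.stabilizer Gal(L/F) (Ideal.span {a}) from
      fun h ↦ (Subgroup.zpowers_le.2 this) (hg h)
    rw [MulAction.mem_stabilizer_iff, Ideal.smul_closure, Set.smul_set_singleton]
    nth_rw 2 [← ha]
    exact (Ideal.span_singleton_mul_left_unit η.isUnit _).symm
  obtain ⟨b, hb⟩ := exists_span_singleton_algebraMap_eq_of_smul_eq hG hcop hstable
  obtain ⟨u, hu⟩ := Ideal.span_singleton_eq_span_singleton.1 hb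
  have hb0 : algebraMap (𝓞 F) (𝓞 L) b ≠ 0 := left_ne_zero_of_mul (hu ▸ ha0)
  refine ⟨u, mul_left_cancel₀ hb0 ?_⟩
  rw [hu, ← ha, ← hu, smul_mul', smul_algebraMap]
  ring

end UnramifiedCyclic

section Divisibility

-- Modulo `p` we have `(1 - s) ^ p = 1 - s ^ p = 0`.
theorem exists_eq_nsmul_of_forall_exists_nsmul_eq_sub {A : Type*} [AddCommGroup A]
    {s : AddMonoid.End A} {p m : ℕ} (hp : p.Prime) (hs : s ^ p = 1) (hm : ¬ p ∣ m)
    (h : ∀ a, ∃ b, m • a = b - s b) (a : A) : ∃ b, a = p • b := by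
  obtain ⟨r, hr⟩ : ∃ r : AddMonoid.End A, (1 - s) ^ p = (p : AddMonoid.End A) * r := by
    obtain ⟨r, hr⟩ := ((Commute.one_left s).sub_left rfl).exists_add_pow_prime_eq hp
    refine ⟨-((1 - s) * s * r), ?_⟩
    rw [sub_add_cancel, one_pow, hs, add_right_comm, right_eq_add] at hr
    rw [eq_neg_of_add_eq_zero_left hr]
    simp only [mul_assoc, mul_neg]
  have hiter : ∀ k : ℕ, ∃ b, m ^ k • a = ((1 - s) ^ k) b := by
    intro k
    induction k with
    | zero => exact ⟨a, by simp⟩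
    | succ k ih =>
      obtain ⟨b, hb⟩ := ih
      obtain ⟨c, hc⟩ := h b
      refine ⟨c, ?_⟩
      rw [pow_succ' m, mul_smul, hb, ← map_nsmul, hc, pow_succ]
      rfl
  obtain ⟨b, hb⟩ := hiter p
  have hdiv : m ^ p • a = p • r b := by
    rw [hb, hr, AddMonoid.End.coe_mul, Function.comp_apply, AddMonoid.End.natCast_apply]
  obtain ⟨u, v, huv⟩ := Nat.isCoprime_iff_coprime.2 ((hp.coprime_iff_not_dvd.2 hm).symm.pow_left p)
  refine ⟨u • r b + v • a, ?_⟩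
  calc a = (u * (m ^ p : ℕ) + v * p) • a := by rw [huv, one_smul]
    _ = p • (u • r b + v • a) := by
      rw [add_smul, mul_smul, mul_smul, natCast_zsmul, natCast_zsmul, hdiv, smul_add,
        smul_comm u, smul_comm v]

theorem exists_unit_forall_pow_ne {K : Type*} [Field K] [NumberField K] (hK : 0 < Units.rank K)
    {p : ℕ} (hp : p ≠ 1) : ∃ u : (𝓞 K)ˣ, ∀ v : (𝓞 K)ˣ, v ^ p ≠ u := by
  let i : Fin (Units.rank K) := ⟨0, hK⟩
  refine ⟨Units.fundSystem K i, fun v hv ↦ hp ?_⟩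
  let y : Units.unitLattice K :=
    ⟨Units.logEmbedding K (Additive.ofMul v), Submodule.mem_map_of_mem trivial⟩
  have hy : (p : ℤ) • y = Units.basisUnitLattice K i := by
    refine Subtype.ext ?_
    rw [← Units.logEmbedding_fundSystem, ← hv, ofMul_pow, map_nsmul, natCast_zsmul]
    rfl
  have hcoord := DFunLike.congr_fun (congrArg (Units.basisUnitLattice K).repr hy) i
  rw [map_smul, Basis.repr_self, Finsupp.single_eq_same, Finsupp.smul_apply, smul_eq_mul] at hcoord
  exact Nat.dvd_one.1 (Int.natCast_dvd_natCast.1 ⟨_, hcoord.symm⟩)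

end Divisibility

section HilbertNinetyFour

theorem units_rank_pos {K : Type*} [Field K] [NumberField K] (hK : 3 ≤ finrank ℚ K) :
    0 < Units.rank K := by
  have h1 := InfinitePlace.card_add_two_mul_card_eq_rank K
  have h2 := InfinitePlace.card_eq_nrRealPlaces_add_nrComplexPlaces K
  rw [Units.rank]
  omega

theorem dvd_classNumber_of_forall_inertia_eq_bot {F L : Type} [Field F] [NumberField F] [Field L]
    [NumberField L] [Algebra F L] [IsGalois F L] {p m : ℕ} (hp : p.Prime) (hp2 : p ≠ 2)
    (hdeg : finrank F L = p) (hG : ∀ P : Ideal (𝓞 L), P.IsMaximal → P.inertia Gal(L/F) = ⊥)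
    (hm : ¬ p ∣ m) (hunits : ∀ u : (𝓞 F)ˣ, u ^ m = 1) : p ∣ classNumber F := by
  by_contra hcl
  have : Fact p.Prime := ⟨hp⟩
  have hcard : Nat.card Gal(L/F) = p := by rw [IsGalois.card_aut_eq_finrank, hdeg]
  obtain ⟨g, hg⟩ := (isCyclic_of_prime_card hcard).exists_generator
  let s : AddMonoid.End (Additive (𝓞 L)ˣ) :=
    (Units.map (MulDistribMulAction.toMonoidHom (𝓞 L) g)).toAdditive
  have hs : s ^ p = 1 := by
    have hiter : ∀ (k : ℕ) (η : Additive (𝓞 L)ˣ),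
        (((s ^ k) η).toMul : 𝓞 L) = g ^ k • (η.toMul : 𝓞 L) := by
      intro k
      induction k with
      | zero => simp
      | succ k ih =>
        intro η
        rw [pow_succ', pow_succ', mul_smul, ← ih]
        rfl
    ext η
    rw [hiter, ← hcard, pow_card_eq_one', one_smul]
    rfl
  have hquot : ∀ a, ∃ b, m • a = b - s b := by
    intro η
    have hη : RingOfIntegers.norm F ((η.toMul ^ m : (𝓞 L)ˣ) : 𝓞 L) = 1 := by
      simpa using congrArg Units.val (hunits (Units.map (RingOfIntegers.norm F) η.toMul))
    obtain ⟨u, hu⟩ := exists_unit_mul_smul_eq_of_norm_eq_one hG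
      (hdeg ▸ hp.coprime_iff_not_dvd.2 hcl) hg hη
    exact ⟨Additive.ofMul u, eq_sub_of_add_eq (congrArg Additive.ofMul (Units.ext hu))⟩
  have hrank : 3 ≤ finrank ℚ L := by
    rw [← finrank_mul_finrank ℚ F L, hdeg]
    have := finrank_pos (R := ℚ) (M := F)
    nlinarith [hp.two_le.lt_of_ne' hp2]
  obtain ⟨η, hη⟩ := exists_unit_forall_pow_ne (units_rank_pos hrank) hp.ne_one
  obtain ⟨v, hv⟩ := exists_eq_nsmul_of_forall_exists_nsmul_eq_sub hp hs hm hquot (Additive.ofMul η)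
  exact hη v.toMul (congrArg Additive.toMul hv.symm)

end HilbertNinetyFour

section CubicExtensions

theorem irreducible_map_of_coprime_finrank {k F : Type*} [Field k] [Field F] [Algebra k F]
    [FiniteDimensional k F] {f : k[X]} (hf : Irreducible f)
    (hcop : f.natDegree.Coprime (finrank k F)) : Irreducible (f.map (algebraMap k F)) := by
  obtain ⟨g, hg, hgf⟩ := exists_irreducible_of_natDegree_pos (f := f.map (algebraMap k F))
    (by rw [natDegree_map]; exact hf.natDegree_pos)
  have : Fact (Irreducible g) := ⟨hg⟩
  let x := AdjoinRoot.root g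
  have : FiniteDimensional F (AdjoinRoot g) := (AdjoinRoot.powerBasis hg.ne_zero).finite
  have hfx : aeval x f = 0 := by
    rw [← aeval_map_algebraMap F, AdjoinRoot.aeval_eq, AdjoinRoot.mk_eq_zero]
    exact hgf
  have hfin : finrank k F * g.natDegree = finrank k (AdjoinRoot g) := by
    rw [← finrank_mul_finrank k F (AdjoinRoot g), (AdjoinRoot.powerBasis hg.ne_zero).finrank,
      AdjoinRoot.powerBasis_dim]
  have := FiniteDimensional.trans k F (AdjoinRoot g)
  have hdvd : f.natDegree ∣ g.natDegree := by
    refine hcop.dvd_of_dvd_mul_left ?_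
    rw [hfin, ← natDegree_mul_leadingCoeff_inv f hf.ne_zero, minpoly.eq_of_irreducible hf hfx]
    exact minpoly.degree_dvd (.of_finite k x)
  have hf0 : f.map (algebraMap k F) ≠ 0 := map_ne_zero hf.ne_zero
  refine (associated_of_dvd_of_natDegree_le hgf hf0 ?_).irreducible hg
  rw [natDegree_map]
  exact Nat.le_of_dvd hg.natDegree_pos hdvd

variable {F L : Type*} [Field F] [Field L] [Algebra F L] {P : Cubic F}

-- The root `a ^ 2 (x - y) (x - z) (y - z)` of the discriminant is `y - z` times `a` times
-- the derivative of `P` at `x`.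
theorem sub_mem_adjoin_simple_of_isSquare_discr (ha : P.a ≠ 0) (hsq : IsSquare P.discr) {x y z : L}
    (hroots : (P.map (algebraMap F L)).roots = {x, y, z}) (hxy : x ≠ y) (hxz : x ≠ z) :
    y - z ∈ F⟮x⟯ := by
  have hx := IntermediateField.mem_adjoin_simple_self F x
  have hF := F⟮x⟯.algebraMap_mem
  obtain ⟨d, hd⟩ := isSquare_iff_exists_sq P.discr |>.1 hsq
  let a := algebraMap F L P.a
  have hderiv : a * (x - y) * (x - z) =
      3 * a * x ^ 2 + 2 * algebraMap F L P.b * x + algebraMap F L P.c := by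
    linear_combination -2 * x * Cubic.b_eq_three_roots ha hroots - Cubic.c_eq_three_roots ha hroots
  have hmem : a * (a * (x - y) * (x - z)) ∈ F⟮x⟯ := by
    rw [hderiv]
    exact mul_mem (hF _) (add_mem (add_mem (mul_mem (mul_mem (ofNat_mem _ 3) (hF _)) (pow_mem hx 2))
      (mul_mem (mul_mem (ofNat_mem _ 2) (hF _)) hx)) (hF _))
  have hne : a * (a * (x - y) * (x - z)) ≠ 0 := by
    have : a ≠ 0 := (_root_.map_ne_zero _).2 ha
    simp [this, sub_ne_zero, hxy, hxz]
  rw [← mul_div_cancel_left₀ (y - z) hne]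
  refine div_mem ?_ hmem
  have hprod := Cubic.discr_eq_prod_three_roots ha hroots
  rw [hd, map_pow, sq_eq_sq_iff_eq_or_eq_neg] at hprod
  have : a * (a * (x - y) * (x - z)) * (y - z) = a * a * (x - y) * (x - z) * (y - z) := by ring
  rw [this]
  rcases hprod with h | h
  · exact h ▸ hF d
  · exact (neg_eq_iff_eq_neg.2 h) ▸ neg_mem (hF d)

theorem adjoin_simple_eq_top_of_isSquare_discr [CharZero F] [IsSplittingField F L P.toPoly]
    (ha : P.a ≠ 0) (hsq : IsSquare P.discr) {x y z : L}
    (hroots : (P.map (algebraMap F L)).roots = {x, y, z}) (hxy : x ≠ y) (hxz : x ≠ z) :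
    F⟮x⟯ = ⊤ := by
  have : CharZero L := charZero_of_injective_algebraMap (algebraMap F L).injective
  set K := F⟮x⟯
  have hx : x ∈ K := IntermediateField.mem_adjoin_simple_self F x
  have hsub : y - z ∈ K := sub_mem_adjoin_simple_of_isSquare_discr ha hsq hroots hxy hxz
  have hadd : y + z ∈ K := by
    have ha' : algebraMap F L P.a ≠ 0 := (_root_.map_ne_zero _).2 ha
    have : y + z = -algebraMap F L P.b / algebraMap F L P.a - x := by
      rw [Cubic.b_eq_three_roots ha hroots, mul_neg, neg_neg, mul_div_cancel_left₀ _ ha']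
      ring
    rw [this]
    exact sub_mem (div_mem (neg_mem (K.algebraMap_mem _)) (K.algebraMap_mem _)) hx
  have hy : y ∈ K := by
    have : y = (y + z + (y - z)) / 2 := by ring
    rw [this]
    exact div_mem (add_mem hadd hsub) (ofNat_mem _ 2)
  have hz : z ∈ K := by simpa using sub_mem hadd hy
  have hle : Algebra.adjoin F (P.toPoly.rootSet L) ≤ K.toSubalgebra := by
    refine Algebra.adjoin_le fun w hw ↦ ?_
    have hw' : w ∈ (P.map (algebraMap F L)).roots := by
      rw [Cubic.map_roots]
      classical exact Multiset.mem_toFinset.1 hw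
    rw [hroots] at hw'
    simp only [Multiset.insert_eq_cons, Multiset.mem_cons, Multiset.mem_singleton] at hw'
    rcases hw' with rfl | rfl | rfl <;> assumption
  rw [IsSplittingField.adjoin_rootSet] at hle
  exact eq_top_iff.2 fun w _ ↦ hle Algebra.mem_top

theorem finrank_eq_three_of_isSquare_discr [CharZero F] (hirr : Irreducible P.toPoly)
    (ha : P.a ≠ 0) [IsSplittingField F L P.toPoly] (hsq : IsSquare P.discr) : finrank F L = 3 := by
  obtain ⟨x, y, z, hroots⟩ := (Cubic.splits_iff_roots_eq_three ha).1
    (IsSplittingField.splits L P.toPoly)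
  have hnodup : ({x, y, z} : Multiset L).Nodup := by
    rw [← hroots, Cubic.map_roots]
    exact nodup_roots hirr.separable.map
  simp only [Multiset.insert_eq_cons, Multiset.nodup_cons, Multiset.mem_cons,
    Multiset.mem_singleton, not_or] at hnodup
  have htop := adjoin_simple_eq_top_of_isSquare_discr ha hsq hroots hnodup.1.1 hnodup.1.2
  have hx : aeval x P.toPoly = 0 := by
    have hmem : x ∈ (P.toPoly.map (algebraMap F L)).roots := by
      rw [← Cubic.map_roots, hroots]
      exact Multiset.mem_cons_self _ _
    simpa using isRoot_of_mem_roots hmem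
  have := IsSplittingField.finiteDimensional L P.toPoly
  rw [← IntermediateField.finrank_top', ← htop,
    IntermediateField.adjoin.finrank (Algebra.IsIntegral.isIntegral x),
    ← minpoly.eq_of_irreducible hirr hx, natDegree_mul_leadingCoeff_inv P.toPoly hirr.ne_zero,
    Cubic.natDegree_of_a_ne_zero ha]

end CubicExtensions

section TraceCubic

/-- The cubic `X ^ 3 - 3 n X - T`. If `E ^ 2 - T E + n ^ 3 = 0` and `e ^ 3 = E`, the trace
`e + n / e` of the cube root is one of its roots; its splitting field over a field in
which `-3 (T ^ 2 - 4 n ^ 3)` is a square is the extension that reflection attaches to `E`. -/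
def traceCubic (n T : ℤ) : Cubic ℤ := ⟨1, 0, -(3 * n), -T⟩

theorem traceCubic_discr (n T : ℤ) : (traceCubic n T).discr = -27 * (T ^ 2 - 4 * n ^ 3) := by
  simp only [Cubic.discr, traceCubic]
  ring

theorem monic_traceCubic (n T : ℤ) : (traceCubic n T).toPoly.Monic := Cubic.monic_of_a_eq_one'

theorem aeval_traceCubic {R : Type*} [CommRing R] (n T : ℤ) (x : R) :
    aeval x (traceCubic n T).toPoly = x ^ 3 - 3 * n * x - T := by
  simp only [Cubic.toPoly, traceCubic, eq_intCast, Int.cast_one, one_mul, Int.cast_zero, zero_mul,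
    add_zero, Int.cast_neg, Int.cast_mul, Int.cast_ofNat, neg_mul, map_add, map_pow, aeval_X,
    aeval_neg, map_mul, map_ofNat (aeval x) 3, map_intCast]
  ring

theorem irreducible_map_traceCubic {n T : ℤ} (hroot : ∀ u : ℤ, u ^ 3 - 3 * n * u - T ≠ 0) :
    Irreducible ((traceCubic n T).toPoly.map (algebraMap ℤ ℚ)) := by
  refine irreducible_of_degree_le_three_of_not_isRoot ?_ fun q hq ↦ ?_
  · rw [(monic_traceCubic n T).natDegree_map, traceCubic,
      Cubic.natDegree_of_a_ne_zero' one_ne_zero]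
    decide
  · rw [IsRoot, eval_map_algebraMap] at hq
    obtain ⟨u, rfl⟩ := isInteger_of_is_root_of_monic (monic_traceCubic n T) hq
    rw [aeval_traceCubic, eq_intCast] at hq
    exact hroot u (by exact_mod_cast hq)

-- Square `y (y ^ 2 + 3 b) = -3 (a y ^ 2 + 3 c)` to obtain a cubic equation for `y ^ 2 / 3`.
theorem isIntegral_of_three_mul_eq_sq {A B : Type*} [CommRing A] [CommRing B] [IsDomain B]
    [Algebra A B] (h3 : (3 : B) ≠ 0) {a b c : A} {w y : B} (hw : 3 * w = y ^ 2)
    (hy : y ^ 3 + 3 * algebraMap A B a * y ^ 2 + 3 * algebraMap A B b * y +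
      9 * algebraMap A B c = 0) :
    IsIntegral A w := by
  refine ⟨Cubic.toPoly ⟨1, 2 * b - 3 * a ^ 2, b ^ 2 - 6 * a * c, -(3 * c ^ 2)⟩,
    Cubic.monic_of_a_eq_one', ?_⟩
  have h27 : (27 : B) ≠ 0 := by
    rw [show (27 : B) = 3 ^ 3 by norm_num]
    exact pow_ne_zero 3 h3
  set a' := algebraMap A B a
  set b' := algebraMap A B b
  set c' := algebraMap A B c
  have hw0 : 27 * (w ^ 3 + (2 * b' - 3 * a' ^ 2) * w ^ 2 + (b' ^ 2 - 6 * a' * c') * w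
      - 3 * c' ^ 2) = 3 * w * (3 * w + 3 * b') ^ 2 - 9 * (a' * (3 * w) + 3 * c') ^ 2 := by ring
  refine (mul_eq_zero_iff_left h27).1 ?_
  have hsq : y ^ 2 * (y ^ 2 + 3 * b') ^ 2 - 9 * (a' * y ^ 2 + 3 * c') ^ 2 = 0 := by
    linear_combination (y ^ 3 + 3 * b' * y - 3 * a' * y ^ 2 - 9 * c') * hy
  rw [← hsq, ← hw, ← hw0]
  simp [Cubic.toPoly, map_ofNat (algebraMap A B), ← sub_eq_add_neg, a', b', c']

variable {B : Type*} [CommRing B] {n T : ℤ} {x y z : B}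

theorem three_mem_of_sub_mem (hnT : IsCoprime n T) (hx : x ^ 3 - 3 * n * x - T = 0)
    (hsum : x + y + z = 0) (hsq : x ^ 2 + x * y + y ^ 2 = 3 * n) {P : Ideal B} (hxy : y - x ∈ P)
    (hxz : z - x ∈ P) : (3 : B) ∈ P := by
  have h3x : 3 * x ∈ P := by
    have : 3 * x = -((y - x) + (z - x)) := by linear_combination hsum
    rw [this]
    exact P.neg_mem (P.add_mem hxy hxz)
  have h3n : 3 * (n : B) ∈ P := by
    have : 3 * (n : B) = (y + 2 * x) * (y - x) + x * (3 * x) := by linear_combination -hsq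
    rw [this]
    exact P.add_mem (P.mul_mem_left _ hxy) (P.mul_mem_left _ h3x)
  obtain ⟨u, v, huv⟩ := hnT.intCast (R := B)
  have : (3 : B) = (u - 3 * v * x) * (3 * n) + v * x ^ 2 * (3 * x) := by
    linear_combination -3 * huv - 3 * v * hx
  rw [this]
  exact P.add_mem (P.mul_mem_left _ h3n) (P.mul_mem_left _ h3x)

variable [IsDomain B]

theorem sq_add_mul_add_sq_eq (hx : x ^ 3 - 3 * n * x - T = 0) (hy : y ^ 3 - 3 * n * y - T = 0)
    (hxy : x ≠ y) : x ^ 2 + x * y + y ^ 2 = 3 * n :=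
  mul_left_cancel₀ (sub_ne_zero.2 hxy) (by linear_combination hx - hy)

theorem add_add_eq_zero (hx : x ^ 3 - 3 * n * x - T = 0) (hy : y ^ 3 - 3 * n * y - T = 0)
    (hz : z ^ 3 - 3 * n * z - T = 0) (hxy : x ≠ y) (hxz : x ≠ z) (hyz : y ≠ z) :
    x + y + z = 0 :=
  mul_left_cancel₀ (sub_ne_zero.2 hyz) (by
    linear_combination sq_add_mul_add_sq_eq hx hy hxy - sq_add_mul_add_sq_eq hx hz hxz)

-- If `σ` is trivial modulo `P`, then `P` contains `3`, hence the trace `c ^ 2 + 2 n ≡ 3 w` of `w`.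
theorem eq_top_of_forall_map_sub_mem (h3 : (3 : B) ≠ 0) (hnT : IsCoprime n T) {c : ℤ}
    (hc : IsCoprime 3 (c ^ 2 + 2 * n)) {θ w : B} (hθ : θ ^ 3 - 3 * n * θ - T = 0)
    (hw : 3 * w = (θ - c) ^ 2) {σ : B →+* B} (hσ : σ θ ≠ θ) (hσ3 : σ (σ (σ θ)) = θ) {P : Ideal B}
    (hP : ∀ x, σ x - x ∈ P) : P = ⊤ := by
  have hroot : ∀ x : B, x ^ 3 - 3 * n * x - T = 0 → σ x ^ 3 - 3 * n * σ x - T = 0 := fun x hx ↦ by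
    simpa [map_ofNat σ 3] using congrArg σ hx
  have hsqrt : ∀ v x : B, 3 * v = (x - c) ^ 2 → 3 * σ v = (σ x - c) ^ 2 := fun v x hx ↦ by
    simpa [map_ofNat σ 3] using congrArg σ hx
  have hsum : θ + σ θ + σ (σ θ) = 0 :=
    add_add_eq_zero hθ (hroot _ hθ) (hroot _ (hroot _ hθ)) hσ.symm
      (fun h ↦ hσ ((congrArg σ h).trans hσ3)) (fun h ↦ hσ (h.trans ((congrArg σ h).trans hσ3)))
  have hsq : θ ^ 2 + θ * σ θ + σ θ ^ 2 = 3 * n := sq_add_mul_add_sq_eq hθ (hroot _ hθ) hσ.symm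
  have htrace : w + σ w + σ (σ w) = c ^ 2 + 2 * n := by
    refine mul_left_cancel₀ h3 ?_
    linear_combination hw + hsqrt _ _ hw + hsqrt _ _ (hsqrt _ _ hw) + 2 * hsq
      + (σ (σ θ) - θ - σ θ - 2 * c) * hsum
  have hP2 : ∀ x, σ (σ x) - x ∈ P := fun x ↦ by simpa using P.add_mem (hP (σ x)) (hP x)
  have h3_mem : (3 : B) ∈ P := three_mem_of_sub_mem hnT hθ hsum hsq (hP θ) (hP2 θ)
  have htrace_mem : ((c ^ 2 + 2 * n : ℤ) : B) ∈ P := by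
    have : ((c ^ 2 + 2 * n : ℤ) : B) = w * 3 + (σ w - w) + (σ (σ w) - w) := by
      push_cast
      linear_combination -htrace
    rw [this]
    exact P.add_mem (P.add_mem (P.mul_mem_left _ h3_mem) (hP w)) (hP2 w)
  obtain ⟨u, v, huv⟩ := hc.intCast (R := B)
  rw [Ideal.eq_top_iff_one, ← huv]
  exact P.add_mem (P.mul_mem_left _ (by exact_mod_cast h3_mem)) (P.mul_mem_left _ htrace_mem)

theorem inertia_eq_bot_of_sq_sub_eq_three_mul {G : Type*} [Group G] [MulSemiringAction G B]
    (hG : Nat.card G = 3) (h3 : (3 : B) ≠ 0) (hnT : IsCoprime n T) {c : ℤ}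
    (hc : IsCoprime 3 (c ^ 2 + 2 * n)) {θ w : B} (hθ : θ ^ 3 - 3 * n * θ - T = 0)
    (hw : 3 * w = (θ - c) ^ 2) {g : G} (hg : g • θ ≠ θ) {P : Ideal B} (hP : P ≠ ⊤) :
    P.inertia G = ⊥ := by
  have : Fact (Nat.card G).Prime := ⟨hG ▸ Nat.prime_three⟩
  refine (P.inertia G).eq_bot_or_eq_top_of_prime_card.resolve_right fun htop ↦ hP ?_
  have hg3 : g • g • g • θ = θ := by
    rw [smul_smul, smul_smul, ← pow_three', ← hG, pow_card_eq_one', one_smul]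
  have hg_mem : g ∈ P.inertia G := htop ▸ Subgroup.mem_top g
  exact eq_top_of_forall_map_sub_mem h3 hnT hc hθ hw
    (σ := MulSemiringAction.toRingHom G B g) hg hg3 hg_mem

theorem inertia_eq_bot_of_notMem_range_algebraMap {F L : Type*} [Field F] [Field L]
    [NumberField L] [Algebra F L] [IsGalois F L] (hdeg : finrank F L = 3) (hnT : IsCoprime n T)
    {c : ℤ} (h9 : 9 ∣ c ^ 3 - 3 * n * c - T) (hc : IsCoprime 3 (c ^ 2 + 2 * n)) {θ : L}
    (hθ : θ ^ 3 - 3 * n * θ - T = 0) (hθF : θ ∉ Set.range (algebraMap F L)) {P : Ideal (𝓞 L)}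
    (hP : P ≠ ⊤) : P.inertia Gal(L/F) = ⊥ := by
  have : FiniteDimensional F L := .of_finrank_pos (by omega)
  obtain ⟨g, hg⟩ : ∃ g : Gal(L/F), g θ ≠ θ := by
    rw [IsGalois.mem_range_algebraMap_iff_fixed] at hθF
    exact not_forall.1 hθF
  obtain ⟨d, hd⟩ := h9
  have hw : IsIntegral ℤ ((θ - c) ^ 2 / 3) := by
    refine isIntegral_of_three_mul_eq_sq three_ne_zero (a := c) (b := c ^ 2 - n) (c := d)
      (mul_div_cancel₀ _ three_ne_zero) ?_
    have hd' : (c ^ 3 - 3 * n * c - T : L) = 9 * d := by exact_mod_cast hd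
    simp only [eq_intCast, Int.cast_sub, Int.cast_pow]
    linear_combination hθ - hd'
  let θ' : 𝓞 L := ⟨θ, (traceCubic n T).toPoly, monic_traceCubic n T, by
    rw [← aeval_def, aeval_traceCubic, hθ]⟩
  let w' : 𝓞 L := ⟨_, hw⟩
  have hcard : Nat.card Gal(L/F) = 3 := by rw [IsGalois.card_aut_eq_finrank, hdeg]
  have h3 : (3 : 𝓞 L) ≠ 0 := OfNat.ofNat_ne_zero 3
  refine inertia_eq_bot_of_sq_sub_eq_three_mul hcard h3 hnT hc (θ := θ') (w := w') (g := g)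
    (RingOfIntegers.ext ?_) (RingOfIntegers.ext ?_) (fun h ↦ hg ?_) hP
  · simp only [map_sub, map_mul, map_pow, map_intCast, map_ofNat, map_zero]
    exact hθ
  · simp only [map_sub, map_mul, map_pow, map_intCast, map_ofNat]
    exact mul_div_cancel₀ _ three_ne_zero
  · exact congrArg (algebraMap (𝓞 L) L) h

theorem three_dvd_classNumber_of_traceCubic {F : Type} [Field F] [NumberField F] {c : ℤ}
    {m : ℕ} (hF : ¬ 3 ∣ finrank ℚ F) (hm : ¬ 3 ∣ m) (hunits : ∀ u : (𝓞 F)ˣ, u ^ m = 1)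
    (hsq : IsSquare ((-27 * (T ^ 2 - 4 * n ^ 3) : ℤ) : F))
    (hroot : ∀ u : ℤ, u ^ 3 - 3 * n * u - T ≠ 0) (hnT : IsCoprime n T)
    (h9 : 9 ∣ c ^ 3 - 3 * n * c - T) (hc : IsCoprime 3 (c ^ 2 + 2 * n)) : 3 ∣ classNumber F := by
  let P := (traceCubic n T).map (algebraMap ℤ F)
  have hP : P.a = 1 := map_one _
  have hP0 : P.a ≠ 0 := hP ▸ one_ne_zero
  have hirr : Irreducible P.toPoly := by
    have := irreducible_map_of_coprime_finrank (F := F) (irreducible_map_traceCubic hroot) (by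
      rw [(monic_traceCubic n T).natDegree_map, traceCubic,
        Cubic.natDegree_of_a_ne_zero' one_ne_zero]
      exact Nat.prime_three.coprime_iff_not_dvd.2 hF)
    rwa [Polynomial.map_map, ← IsScalarTower.algebraMap_eq, ← Cubic.map_toPoly] at this
  let L := P.toPoly.SplittingField
  have hdeg : finrank F L = 3 := finrank_eq_three_of_isSquare_discr hirr hP0 (by
    rw [← traceCubic_discr] at hsq
    convert hsq
    simp [P, Cubic.discr, traceCubic, Cubic.map])
  have : NumberField L := NumberField.of_module_finite F L
  have : IsGalois F L := IsGalois.of_separable_splitting_field (p := P.toPoly) hirr.separable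
  obtain ⟨θ, hθ⟩ := (SplittingField.splits P.toPoly).exists_eval_eq_zero (by
    rw [degree_map]
    exact hirr.degree_pos.ne')
  rw [eval_map_algebraMap] at hθ
  have hθF : θ ∉ Set.range (algebraMap F L) := by
    rintro ⟨x, rfl⟩
    rw [aeval_algebraMap_eq_zero_iff, ← eval_map_algebraMap, Algebra.algebraMap_self, map_id] at hθ
    exact hirr.not_isRoot_of_natDegree_ne_one
      (by rw [Cubic.natDegree_of_a_ne_zero hP0]; decide) hθ
  have hθ0 : θ ^ 3 - 3 * n * θ - T = 0 := by
    rw [← aeval_traceCubic, ← aeval_map_algebraMap F, ← Cubic.map_toPoly]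
    exact hθ
  exact dvd_classNumber_of_forall_inertia_eq_bot Nat.prime_three (by decide) hdeg
    (fun Q hQ ↦ inertia_eq_bot_of_notMem_range_algebraMap hdeg hnT h9 hc hθ0 hθF hQ.ne_top)
    hm hunits

end TraceCubic

section QuadraticFields

section

variable {k K : Type*} [Field k] [Field K] [Algebra k K] {δ : K} {d : k}

theorem aeval_X_sq_sub_C_eq_zero (hδ : δ ^ 2 = algebraMap k K d) :
    aeval δ (X ^ 2 - C d) = 0 := by simp [hδ]

theorem finrank_le_two_of_sq_eq (hδ : δ ^ 2 = algebraMap k K d) (htop : k⟮δ⟯ = ⊤) :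
    finrank k K ≤ 2 := by
  have hmonic : (X ^ 2 - C d).Monic := monic_X_pow_sub_C d two_ne_zero
  have haeval := aeval_X_sq_sub_C_eq_zero hδ
  rw [← IntermediateField.finrank_top', ← htop,
    IntermediateField.adjoin.finrank ⟨_, hmonic, haeval⟩]
  exact (natDegree_le_natDegree (minpoly.min k δ hmonic haeval)).trans natDegree_X_pow_sub_C.le

theorem exists_eq_add_mul_of_sq_eq (hδ : δ ^ 2 = algebraMap k K d) (htop : k⟮δ⟯ = ⊤) (x : K) :
    ∃ a b : k, x = algebraMap k K a + algebraMap k K b * δ := by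
  have hmonic : (X ^ 2 - C d).Monic := monic_X_pow_sub_C d two_ne_zero
  have haeval := aeval_X_sq_sub_C_eq_zero hδ
  have hint : IsIntegral k δ := ⟨_, hmonic, haeval⟩
  have hx : x ∈ Algebra.adjoin k {δ} := by
    rw [← IntermediateField.adjoin_simple_toSubalgebra_of_isAlgebraic hint.isAlgebraic, htop]
    exact IntermediateField.mem_top
  rw [Algebra.adjoin_singleton_eq_range_aeval] at hx
  obtain ⟨p, rfl⟩ := hx
  have hdeg : (p %ₘ (X ^ 2 - C d)).natDegree ≤ 1 := Nat.le_of_lt_succ <|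
    (natDegree_modByMonic_lt p hmonic (ne_of_apply_ne natDegree (by simp))).trans_eq
      natDegree_X_pow_sub_C
  obtain ⟨b, a, hab⟩ := exists_eq_X_add_C_of_natDegree_le_one hdeg
  refine ⟨a, b, ?_⟩
  change aeval δ p = _
  rw [← aeval_modByMonic_eq_self_of_root haeval, hab]
  simp [add_comm]

theorem isSquare_or_isSquare_mul_of_sq_eq [NeZero (2 : k)] (hδ : δ ^ 2 = algebraMap k K d)
    (htop : k⟮δ⟯ = ⊤) {x : K} {e : k} (hx : x ^ 2 = algebraMap k K e) :
    IsSquare e ∨ IsSquare (d * e) := by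
  have isSquare_of_sq_eq {q : k} (hq : algebraMap k K q ^ 2 = algebraMap k K e) : IsSquare e :=
    ⟨q, (algebraMap k K).injective (by rw [← hq, map_mul, sq])⟩
  obtain ⟨a, b, rfl⟩ := exists_eq_add_mul_of_sq_eq hδ htop x
  by_cases hab : 2 * a * b = 0
  · rw [mul_eq_zero, mul_eq_zero, or_iff_right (two_ne_zero' k)] at hab
    rcases hab with rfl | rfl
    · refine .inr ⟨d * b, (algebraMap k K).injective ?_⟩
      simp only [map_mul, ← hδ, ← hx, map_zero]
      ring
    · exact .inl (isSquare_of_sq_eq (q := a) (by simpa using hx))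
  · have hδ' : δ = algebraMap k K ((e - a ^ 2 - b ^ 2 * d) / (2 * a * b)) := by
      rw [map_div₀, eq_div_iff ((_root_.map_ne_zero _).2 hab)]
      simp only [map_sub, map_mul, map_pow, ← hδ, ← hx, map_ofNat]
      ring
    rw [hδ', ← map_mul, ← map_add] at hx
    exact .inl (isSquare_of_sq_eq hx)

end

variable {K : Type*} [Field K]

theorem isTotallyComplex_of_sq_eq_intCast {δ : K} {d : ℤ} (hd : d < 0) (hδ : δ ^ 2 = d) :
    IsTotallyComplex K where
  isComplex v := by
    rw [← InfinitePlace.not_isReal_iff_isComplex]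
    intro hv
    have hsq : InfinitePlace.embedding_of_isReal hv δ ^ 2 = d := by rw [← map_pow, hδ, map_intCast]
    exact (sq_nonneg _).not_gt (hsq.trans_lt (Int.cast_lt_zero.2 hd))

variable [NumberField K]

theorem finrank_eq_two_and_rank_units_eq_zero [IsTotallyComplex K] (hK : finrank ℚ K ≤ 2) :
    finrank ℚ K = 2 ∧ Units.rank K = 0 := by
  have hfinrank := IsTotallyComplex.finrank K
  have hcard := InfinitePlace.card_eq_nrRealPlaces_add_nrComplexPlaces K
  have hreal := IsTotallyComplex.nrRealPlaces_eq_zero K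
  have hpos : 0 < finrank ℚ K := finrank_pos
  rw [Units.rank]
  omega

theorem units_pow_torsionOrder_eq_one (hrank : Units.rank K = 0) (u : (𝓞 K)ˣ) :
    u ^ Units.torsionOrder K = 1 := by
  have : IsEmpty (Fin (Units.rank K)) := hrank ▸ Fin.isEmpty
  obtain ⟨⟨ζ, e⟩, hu, -⟩ := Units.exist_unique_eq_mul_prod K u
  rw [hu, Fintype.prod_empty, mul_one]
  exact congrArg Subtype.val (pow_card_eq_one' (x := ζ))

theorem exists_sq_eq_neg_three_of_three_dvd_torsionOrder (h : 3 ∣ Units.torsionOrder K) :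
    ∃ x : K, x ^ 2 = -3 := by
  have : Fact (Nat.Prime 3) := ⟨Nat.prime_three⟩
  obtain ⟨ζ, hζ⟩ := exists_prime_orderOf_dvd_card' 3 h
  have hprim : IsPrimitiveRoot (algebraMap (𝓞 K) K (ζ : (𝓞 K)ˣ)) 3 := by
    rw [← Subgroup.orderOf_coe] at hζ
    exact ((IsPrimitiveRoot.coe_units_iff.2 (hζ ▸ IsPrimitiveRoot.orderOf _))).map_of_injective
      RingOfIntegers.coe_injective
  have hsum := hprim.geom_sum_eq_zero (by decide)
  simp only [Finset.sum_range_succ, Finset.sum_range_zero] at hsum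
  exact ⟨2 * algebraMap (𝓞 K) K (ζ : (𝓞 K)ˣ) + 1, by linear_combination 4 * hsum⟩

theorem not_three_dvd_torsionOrder {δ : K} {M : ℤ} (hM : 2 ≤ M) (hsqf : Squarefree M)
    (hδ : δ ^ 2 = (-3 * M : ℤ)) (htop : ℚ⟮δ⟯ = ⊤) : ¬ 3 ∣ Units.torsionOrder K := by
  intro h
  obtain ⟨x, hx⟩ := exists_sq_eq_neg_three_of_three_dvd_torsionOrder h
  have hx' : x ^ 2 = algebraMap ℚ K (-3 : ℤ) := by simpa using hx
  have hδ' : δ ^ 2 = algebraMap ℚ K (-3 * M : ℤ) := by simpa using hδ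
  rcases isSquare_or_isSquare_mul_of_sq_eq hδ' htop hx' with hsq | hsq
  · exact absurd (Rat.isSquare_intCast_iff.1 hsq).nonneg (by decide)
  · rw [← Int.cast_mul, Rat.isSquare_intCast_iff] at hsq
    obtain ⟨s, hs⟩ := hsq
    obtain ⟨s, rfl⟩ : 3 ∣ s := Int.prime_three.dvd_of_dvd_pow (n := 2) ⟨3 * M, by linarith⟩
    have hsM : M = s * s := by linarith
    rcases Int.isUnit_iff.1 (hsqf s ⟨1, by rw [hsM, mul_one]⟩) with rfl | rfl <;> omega

end QuadraticFields

section IntegerRoots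

theorem dvd_of_sq_dvd_squarefree_mul_sq {M q r : ℤ} (hM : Squarefree M) (h : q ^ 2 ∣ M * r ^ 2) :
    q ∣ r := by
  rcases eq_or_ne r 0 with rfl | hr
  · exact dvd_zero q
  obtain ⟨q', r', hcop, hq, hr'⟩ := Int.exists_gcd_one (Int.gcd_pos_of_ne_zero_right q hr)
  have hg : (Int.gcd q r : ℤ) ^ 2 ≠ 0 := by
    exact_mod_cast pow_ne_zero 2 (Int.gcd_pos_of_ne_zero_right q hr).ne'
  have hdvd : q' ^ 2 ∣ M * r' ^ 2 := by
    rw [← mul_dvd_mul_iff_right hg, mul_assoc, ← mul_pow, ← mul_pow, ← hq, ← hr']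
    exact h
  have hq'M : q' * q' ∣ M := by
    rw [← sq]
    exact (Int.isCoprime_iff_gcd_eq_one.2 hcop).pow.dvd_of_dvd_mul_right hdvd
  calc q = q' * Int.gcd q r := hq
    _ ∣ r' * Int.gcd q r := mul_dvd_mul_right (hM q' hq'M).dvd _
    _ = r := hr'.symm

theorem exists_add_mul_sqrt_cube_eq {n T M r u : ℤ} (hM : 0 ≤ M) (hsqf : Squarefree M)
    (hr : r ≠ 0) (heq : T ^ 2 - 4 * n = M * r ^ 2) (hn : n ^ 2 = 1)
    (hu : u ^ 3 - 3 * n * u - T = 0) :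
    ∃ v : ℤ, u ^ 2 - M * v ^ 2 = 4 * n ∧
      (((u : ℝ) + (v : ℝ) * Real.sqrt M) / 2) ^ 3 = ((T : ℝ) + (r : ℝ) * Real.sqrt M) / 2 := by
  have hfac : (u ^ 2 - 4 * n) * (u ^ 2 - n) ^ 2 = M * r ^ 2 := by
    linear_combination (u ^ 3 - 3 * n * u + T) * hu + heq - 4 * n * hn
  obtain ⟨v, rfl⟩ : u ^ 2 - n ∣ r :=
    dvd_of_sq_dvd_squarefree_mul_sq hsqf ⟨u ^ 2 - 4 * n, by rw [← hfac, mul_comm]⟩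
  have hv : u ^ 2 - M * v ^ 2 = 4 * n :=
    mul_right_cancel₀ (pow_ne_zero 2 (left_ne_zero_of_mul hr)) (by linear_combination hfac)
  refine ⟨v, hv, ?_⟩
  have hs : Real.sqrt M ^ 2 = M := Real.sq_sqrt (by exact_mod_cast hM)
  have hv' : (u : ℝ) ^ 2 - M * v ^ 2 = 4 * n := by exact_mod_cast hv
  have hu' : (u : ℝ) ^ 3 - 3 * n * u - T = 0 := by exact_mod_cast hu
  push_cast
  linear_combination (1 / 8) * (3 * u * v ^ 2 + v ^ 3 * Real.sqrt M) * hs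
    - (1 / 8) * (3 * u + v * Real.sqrt M) * hv' + (1 / 2) * hu'

end IntegerRoots

section MirrorField

-- `c` is congruent modulo `3` to the trace of a cube root of `E` over the `3`-adic numbers.
theorem exists_local_cube_root_of_modEq {t₀ T M r : ℤ} (ht₀ : t₀ = 0 ∨ t₀ = 4 ∨ t₀ = 5)
    (hT : T ≡ t₀ [ZMOD 9])
    (heq : T ^ 2 + 4 = M * r ^ 2 ∨ (t₀ = 0 ∧ T ^ 2 - 4 = M * r ^ 2)) :
    ∃ n c : ℤ, IsUnit n ∧ T ^ 2 - 4 * n = M * r ^ 2 ∧ 9 ∣ c ^ 3 - 3 * n * c - T ∧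
      IsCoprime 3 (c ^ 2 + 2 * n) := by
  rcases heq with heq | ⟨rfl, heq⟩
  · have nine_dvd {c : ℤ} (hc : c ^ 3 + 3 * c ≡ t₀ [ZMOD 9]) : 9 ∣ c ^ 3 - 3 * (-1) * c - T := by
      simpa using (hT.trans hc.symm).dvd
    rcases ht₀ with rfl | rfl | rfl
    · exact ⟨-1, 0, by decide, by linarith, nine_dvd rfl, by decide⟩
    · exact ⟨-1, 1, by decide, by linarith, nine_dvd rfl, by decide⟩
    · exact ⟨-1, 2, by decide, by linarith, nine_dvd rfl, by decide⟩
  · exact ⟨1, 0, by decide, heq, by simpa using hT.dvd, by decide⟩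

theorem sq_ne_four_mul_of_modEq {t₀ T n : ℤ} (ht₀ : t₀ = 0 ∨ t₀ = 4 ∨ t₀ = 5)
    (hT : T ≡ t₀ [ZMOD 9]) (hn : IsUnit n) : T ^ 2 ≠ 4 * n := by
  intro h
  have hlt : T ^ 2 < 3 ^ 2 := by rcases Int.isUnit_iff.1 hn with rfl | rfl <;> omega
  obtain ⟨hlo, hhi⟩ := abs_lt_of_sq_lt_sq' hlt (by decide)
  have hmod : T % 9 = t₀ % 9 := hT
  obtain rfl : T = 0 := by omega
  rcases Int.isUnit_iff.1 hn with rfl | rfl <;> omega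

theorem adjoin_simple_gen_eq_top {k K : Type*} [Field k] [Field K] [Algebra k K] (x : K) :
    k⟮IntermediateField.AdjoinSimple.gen k x⟯ = ⊤ :=
  IntermediateField.lift_injective _ <| by
    rw [IntermediateField.lift_adjoin_simple, IntermediateField.lift_top,
      IntermediateField.AdjoinSimple.coe_gen]

theorem exists_sq_eq_and_adjoin_eq_top {M : ℤ} (hM : 0 ≤ M) {F : IntermediateField ℚ ℂ}
    (hF : F = IntermediateField.adjoin ℚ {((Real.sqrt (3 * (M : ℝ)) : ℝ) : ℂ) * Complex.I}) :
    ∃ δ : F, δ ^ 2 = (-3 * M : ℤ) ∧ ℚ⟮δ⟯ = ⊤ := by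
  subst hF
  have hsqrt : ((Real.sqrt (3 * (M : ℝ)) : ℝ) : ℂ) ^ 2 = 3 * M := by
    exact_mod_cast Real.sq_sqrt (x := 3 * (M : ℝ)) (by positivity)
  refine ⟨IntermediateField.AdjoinSimple.gen ℚ _, Subtype.ext ?_, ?_⟩
  · simp only [SubmonoidClass.coe_pow, IntermediateField.AdjoinSimple.coe_gen, mul_pow, hsqrt,
      Complex.I_sq, SubringClass.coe_intCast]
    push_cast
    ring
  · exact adjoin_simple_gen_eq_top _

theorem three_divides_class_number_of_mirror_field_general
    {t₀ T M r : ℤ} (ht₀ : t₀ = 0 ∨ t₀ = 4 ∨ t₀ = 5) (hT : T ≡ t₀ [ZMOD 9])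
    (hM : 2 ≤ M) (hsqf : Squarefree M)
    (heq : T ^ 2 + 4 = M * r ^ 2 ∨ (t₀ = 0 ∧ T ^ 2 - 4 = M * r ^ 2))
    (hnotcube : ¬∃ u v : ℤ, (u ^ 2 - M * v ^ 2 = 4 ∨ u ^ 2 - M * v ^ 2 = -4) ∧
      (((u : ℝ) + (v : ℝ) * Real.sqrt M) / 2) ^ 3 =
        ((T : ℝ) + (r : ℝ) * Real.sqrt M) / 2)
    {F : Type} [Field F] [NumberField F] {δ : F} (hδ : δ ^ 2 = (-3 * M : ℤ))
    (htop : ℚ⟮δ⟯ = ⊤) : 3 ∣ classNumber F := by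
  obtain ⟨n, c, hn, hTn, h9, hc⟩ := exists_local_cube_root_of_modEq ht₀ hT heq
  have hn2 : n ^ 2 = 1 := Int.isUnit_sq hn
  have hr : r ≠ 0 := by
    rintro rfl
    exact sq_ne_four_mul_of_modEq ht₀ hT hn (by linear_combination hTn)
  have hroot (u : ℤ) : u ^ 3 - 3 * n * u - T ≠ 0 := fun hu ↦ by
    obtain ⟨v, huv, hcube⟩ := exists_add_mul_sqrt_cube_eq (by omega) hsqf hr hTn hn2 hu
    have hnorm : 4 * n = 4 ∨ 4 * n = -4 := by rcases Int.isUnit_iff.1 hn with rfl | rfl <;> decide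
    exact hnotcube ⟨u, v, huv ▸ hnorm, hcube⟩
  have hsq : IsSquare ((-27 * (T ^ 2 - 4 * n ^ 3) : ℤ) : F) := by
    refine ⟨3 * r * δ, ?_⟩
    have hdiscr : -27 * (T ^ 2 - 4 * n ^ 3) = 9 * r ^ 2 * (-3 * M) := by
      linear_combination -27 * hTn + 108 * n * hn2
    rw [hdiscr, Int.cast_mul, ← hδ]
    push_cast
    ring
  have := isTotallyComplex_of_sq_eq_intCast (by linarith) hδ
  obtain ⟨hdeg, hrank⟩ := finrank_eq_two_and_rank_units_eq_zero
    (finrank_le_two_of_sq_eq (d := ((-3 * M : ℤ) : ℚ)) (by simpa using hδ) htop)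
  exact three_dvd_classNumber_of_traceCubic (by rw [hdeg]; decide)
    (not_three_dvd_torsionOrder hM hsqf hδ htop) (units_pow_torsionOrder_eq_one hrank) hsq hroot
    (isCoprime_one_left.of_isCoprime_of_dvd_left hn.dvd) h9 hc

end MirrorField

/-- with `T = t₀ + 9t`, `t₀ ∈ {0, 4, 5}`, `T² + 4 = M·r²`
(or `T² − 4 = M·r²` when `t₀ = 0`), `M ≥ 2` squarefree, `r ≥ 1`, if the unit
`E = (T + r√M)/2` of `O_{ℚ(√M)}` is not the cube of a unit of `O_{ℚ(√M)}`, then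
`3` divides the class number of the imaginary quadratic field `ℚ(√(−3M))`. -/
theorem three_divides_class_number_of_mirror_field
    (t₀ t : ℤ) (ht₀ : t₀ = 0 ∨ t₀ = 4 ∨ t₀ = 5) (ht : 1 ≤ t)
    (T : ℤ) (hT : T = t₀ + 9 * t)
    (M r : ℤ) (hM : 2 ≤ M) (hsqf : Squarefree M) (hr : 1 ≤ r)
    (heq : T ^ 2 + 4 = M * r ^ 2 ∨ (t₀ = 0 ∧ T ^ 2 - 4 = M * r ^ 2))
    (hnotcube : ¬∃ u v : ℤ, (u ^ 2 - M * v ^ 2 = 4 ∨ u ^ 2 - M * v ^ 2 = -4) ∧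
      (((u : ℝ) + (v : ℝ) * Real.sqrt M) / 2) ^ 3 =
        ((T : ℝ) + (r : ℝ) * Real.sqrt M) / 2) :
    ∀ (F : IntermediateField ℚ ℂ) [NumberField F],
      F = IntermediateField.adjoin ℚ
        {((Real.sqrt (3 * (M : ℝ)) : ℝ) : ℂ) * Complex.I} →
      3 ∣ NumberField.classNumber F := by
  intro F _ hF
  obtain ⟨δ, hδ, htop⟩ := exists_sq_eq_and_adjoin_eq_top (by omega) hF
  exact three_divides_class_number_of_mirror_field_general ht₀ (by subst hT; simp [Int.ModEq]) hM
    hsqf heq hnotcube hδ htop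
end

section
/- Let p ≥ 5 be a prime, s ∈ {−1, 1}, and t ≥ 1 an integer. Suppose p⁴t² − 4s = M·r² with M ≥ 2 squarefree and r ≥ 1, and let E = (p²t + r√M)/2, a unit of norm s of the ring of integers O_K of K = ℚ(√M). Let ζ_p = exp(2πi/p) ∈ ℂ and let F = ℚ((ζ_p − ζ_p^{−1})·√M), the imaginary cyclic subfield of degree p − 1 of ℚ(ζ_p, √M) distinct from ℚ(ζ_p). If E is not a pth power in the unit group of O_K, then p divides the class number of F. -/
/-! Put `E' = p²t - E` and `A = -s E² = -E/E'`, and let `H = F(ζ, A^{1/p})`. Since `E` is not a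
`p`-th power, `p` divides `[H : F]`. The group of `H/F` is abelian: each nontrivial element either
fixes `ζ` and multiplies `A^{1/p}` by a `p`-th root of unity, or inverts `ζ` and conjugates `√M`.
As `E` and `-E'` agree modulo `p²`, so do `A` and `1`, which makes `H/F` unramified at the primes
above `p`; it is unramified at the remaining finite primes because `A` is a unit. A subgroup of
index `p` thus yields an everywhere unramified cyclic extension `N/F` of odd degree `p`, and
Hilbert's Theorem 94 applies: comparing unit ranks produces a unit of norm one that is not of the
form `ε / g ε` with `ε` a unit, Hilbert 90 turns it into a principal ideal of `N` fixed by the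
Galois group, and this ideal comes from an ideal of `F` that is not principal but whose `p`-th
power is. -/

open Polynomial Module NumberField IntermediateField

section IndexOfEndomorphisms

lemma exists_X_sub_one_pow_eq_geom_sum_add (p : ℕ) [hp : Fact p.Prime] :
    ∃ q : ℤ[X], (X - 1) ^ (p - 1) = ∑ i ∈ Finset.range p, X ^ i + C (p : ℤ) * q := by
  have hmod : (((X - 1) ^ (p - 1) - ∑ i ∈ Finset.range p, X ^ i : ℤ[X]).map
      (Int.castRingHom (ZMod p))) = 0 := by
    have hX : (X - 1 : (ZMod p)[X]) ≠ 0 := by simpa using X_sub_C_ne_zero (1 : ZMod p)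
    have hfrob : (X - 1 : (ZMod p)[X]) ^ p = X ^ p - 1 := by
      simpa using sub_pow_char (X : (ZMod p)[X]) 1 (p := p)
    apply mul_right_cancel₀ hX
    simp only [Polynomial.map_sub, Polynomial.map_pow, map_X, Polynomial.map_one,
      Polynomial.map_sum, sub_mul, geom_sum_mul, zero_mul]
    rw [← pow_succ, Nat.sub_add_cancel hp.out.one_le, hfrob, sub_self]
  obtain ⟨q, hq⟩ : C (p : ℤ) ∣ ((X - 1) ^ (p - 1) - ∑ i ∈ Finset.range p, X ^ i : ℤ[X]) := by
    rw [C_dvd_iff_dvd_coeff]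
    intro i
    rw [← ZMod.intCast_zmod_eq_zero_iff_dvd]
    simpa only [coeff_map, coeff_zero, eq_intCast] using congrArg (coeff · i) hmod
  exact ⟨q, by rw [← hq]; ring⟩

lemma index_range_pow_dvd_index_range_pow {V : Type*} [AddCommGroup V] (f : Module.End ℤ V)
    (k : ℕ) : (f ^ k).range.toAddSubgroup.index ∣ f.range.toAddSubgroup.index ^ k := by
  induction k with
  | zero => simp [Module.End.one_eq_id]
  | succ k ih =>
    have hrange : (f ^ (k + 1)).range.toAddSubgroup =
        (f ^ k).range.toAddSubgroup.map f.toAddMonoidHom := by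
      rw [pow_succ', Module.End.mul_eq_comp, LinearMap.range_comp]; rfl
    rw [hrange, AddSubgroup.index_map, pow_succ]
    exact mul_dvd_mul ((AddSubgroup.index_dvd_of_le le_sup_left).trans ih) dvd_rfl

variable {W : Type*} [AddCommGroup W]

lemma range_nsmul_le_comap_mkQ_torsion (n : ℕ) :
    (nsmulAddMonoidHom (α := W) n).range ≤
      (nsmulAddMonoidHom (α := W ⧸ Submodule.torsion ℤ W) n).range.comap
        (Submodule.torsion ℤ W).mkQ.toAddMonoidHom := by
  rintro _ ⟨w, rfl⟩
  exact ⟨(Submodule.torsion ℤ W).mkQ w, by simp⟩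

variable [Module.Finite ℤ W]

lemma index_comap_mkQ_torsion_range_nsmul (n : ℕ) :
    ((nsmulAddMonoidHom (α := W ⧸ Submodule.torsion ℤ W) n).range.comap
      (Submodule.torsion ℤ W).mkQ.toAddMonoidHom).index = n ^ finrank ℤ W := by
  rw [AddSubgroup.index_comap_of_surjective _ (Submodule.torsion ℤ W).mkQ_surjective,
    AddSubgroup.index_range_nsmul, finrank_quotient_eq_of_le_torsion le_rfl]

lemma pow_finrank_dvd_index_range_nsmul (n : ℕ) :
    n ^ finrank ℤ W ∣ (nsmulAddMonoidHom (α := W) n).range.index :=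
  index_comap_mkQ_torsion_range_nsmul (W := W) n ▸
    AddSubgroup.index_dvd_of_le (range_nsmul_le_comap_mkQ_torsion n)

lemma index_range_nsmul_eq_pow_finrank {n : ℕ} (htors : ∀ w : W, n • w = 0 → w = 0) :
    (nsmulAddMonoidHom (α := W) n).range.index = n ^ finrank ℤ W := by
  rw [← index_comap_mkQ_torsion_range_nsmul]
  refine congrArg _ (le_antisymm (range_nsmul_le_comap_mkQ_torsion n) ?_)
  rintro w ⟨y, hy⟩
  obtain ⟨v, rfl⟩ := (Submodule.torsion ℤ W).mkQ_surjective y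
  have hmem : w - n • v ∈ Submodule.torsion ℤ W := by
    rw [← (Submodule.torsion ℤ W).ker_mkQ, LinearMap.mem_ker, map_sub, map_nsmul, sub_eq_zero]
    exact hy.symm
  have : Finite (Submodule.torsion ℤ W) := finite_of_fg_torsion _ Submodule.torsion_isTorsion
  have hinj : Function.Injective (nsmulAddMonoidHom (α := Submodule.torsion ℤ W) n) :=
    (injective_iff_map_eq_zero _).mpr fun x hx =>
      Subtype.ext (htors x (by simpa using congrArg Subtype.val hx))
  obtain ⟨x, hx⟩ := Finite.surjective_of_injective hinj ⟨_, hmem⟩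
  have hx' : n • (x : W) = w - n • v := congrArg Subtype.val hx
  exact ⟨v + x, by simp [hx']⟩

lemma pow_finrank_dvd_index_range_sub_one_pow {p : ℕ} [Fact p.Prime] (τ : Module.End ℤ W)
    (hτ : ∑ i ∈ Finset.range p, τ ^ i = 0) :
    p ^ finrank ℤ W ∣ (τ - 1).range.toAddSubgroup.index ^ (p - 1) := by
  obtain ⟨q, hq⟩ := exists_X_sub_one_pow_eq_geom_sum_add p
  have hpow : (τ - 1) ^ (p - 1) = p • aeval τ q := by
    simpa [hτ] using congrArg (aeval τ) hq
  refine (pow_finrank_dvd_index_range_nsmul p).trans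
    ((AddSubgroup.index_dvd_of_le ?_).trans (index_range_pow_dvd_index_range_pow (τ - 1) (p - 1)))
  rintro _ ⟨w, rfl⟩
  exact ⟨aeval τ q w, by rw [hpow]; rfl⟩

end IndexOfEndomorphisms

section CyclicAction

variable {U : Type*} [AddCommGroup U] {p : ℕ} {σ : Module.End ℤ U}

lemma mem_ker_sub_one_iff {u : U} : u ∈ (σ - 1).ker ↔ σ u = u := by
  rw [LinearMap.mem_ker, LinearMap.sub_apply, sub_eq_zero, Module.End.one_apply]

lemma geom_sum_apply_of_fixed {u : U} (hu : σ u = u) :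
    (∑ i ∈ Finset.range p, σ ^ i) u = p • u := by
  have hpow (i : ℕ) : (σ ^ i) u = u := by
    rw [Module.End.pow_apply]; exact Function.iterate_fixed hu i
  simp [LinearMap.sum_apply, hpow]

lemma mapsTo_range_sub_one : ∀ x ∈ (σ - 1).range, σ x ∈ (σ - 1).range := by
  rintro _ ⟨v, rfl⟩
  exact ⟨σ v, by simp⟩

lemma geom_sum_restrict_range_sub_one (hσ : σ ^ p = 1) :
    ∑ i ∈ Finset.range p, (σ.restrict mapsTo_range_sub_one : Module.End ℤ (σ - 1).range) ^ i
      = 0 := by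
  have hcoe (i : ℕ) (v : (σ - 1).range) :
      (((σ.restrict mapsTo_range_sub_one : Module.End ℤ (σ - 1).range) ^ i) v : U) =
        (σ ^ i) v := by
    rw [Module.End.pow_restrict, LinearMap.coe_restrict_apply]
  refine LinearMap.ext fun v => Subtype.ext ?_
  obtain ⟨u, hu⟩ := v.2
  simp only [LinearMap.sum_apply, AddSubmonoidClass.coe_finsetSum, hcoe]
  rw [← LinearMap.sum_apply, ← hu, ← Module.End.mul_apply, geom_sum_mul, hσ, sub_self]
  rfl

-- The norm carries `(σ - 1)⁻¹ (range (σ - 1) ^ 2)` into `p • ker (σ - 1)`.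
lemma index_range_restrict_sub_one_dvd (hσ : σ ^ p = 1)
    (hker : (∑ i ∈ Finset.range p, σ ^ i).ker ≤ (σ - 1).range) :
    ((σ.restrict mapsTo_range_sub_one : Module.End ℤ (σ - 1).range) - 1).range.toAddSubgroup.index ∣
      (nsmulAddMonoidHom (α := (σ - 1).ker) p).range.index := by
  have hmem (u : U) : (∑ i ∈ Finset.range p, σ ^ i) u ∈ (σ - 1).ker := by
    rw [LinearMap.mem_ker, ← Module.End.mul_apply, mul_geom_sum, hσ, sub_self, LinearMap.zero_apply]
  let norm : U →+ (σ - 1).ker := (LinearMap.codRestrict _ _ hmem).toAddMonoidHom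
  rw [← AddSubgroup.index_comap_of_surjective _ (f := (σ - 1).rangeRestrict.toAddMonoidHom)
    (σ - 1).surjective_rangeRestrict]
  refine (AddSubgroup.index_dvd_of_le
    (H := (nsmulAddMonoidHom (α := (σ - 1).ker) p).range.comap norm) ?_).trans ?_
  · rintro u ⟨w, hw⟩
    have hw' : (∑ i ∈ Finset.range p, σ ^ i) u = p • (w : U) := (congrArg Subtype.val hw).symm
    have hrange : u - w ∈ (σ - 1).range := hker <| by
      rw [LinearMap.mem_ker, map_sub, hw',
        geom_sum_apply_of_fixed (mem_ker_sub_one_iff.mp w.2), sub_self]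
    refine ⟨⟨u - w, hrange⟩, Subtype.ext ?_⟩
    change (σ - 1) (u - w) = (σ - 1) u
    rw [map_sub, sub_eq_self]
    exact w.2
  · rw [AddSubgroup.index_comap]
    exact AddSubgroup.relIndex_dvd_index_of_normal _ _

theorem finrank_le_finrank_fixed_mul [Module.Finite ℤ U] [hp : Fact p.Prime] (hσ : σ ^ p = 1)
    (htors : ∀ u : U, σ u = u → p • u = 0 → u = 0)
    (hker : (∑ i ∈ Finset.range p, σ ^ i).ker ≤ (σ - 1).range) :
    finrank ℤ U ≤ finrank ℤ (σ - 1).ker * p := by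
  have hrank : finrank ℤ (σ - 1).range + finrank ℤ (σ - 1).ker = finrank ℤ U := by
    rw [← (σ - 1).quotKerEquivRange.finrank_eq]
    exact Submodule.finrank_quotient_add_finrank _
  have hindex := index_range_restrict_sub_one_dvd hσ hker
  rw [index_range_nsmul_eq_pow_finrank fun w hw => Subtype.ext <|
    htors w (mem_ker_sub_one_iff.mp w.2) (by simpa using congrArg Subtype.val hw)] at hindex
  have hdvd := (pow_finrank_dvd_index_range_sub_one_pow _
    (geom_sum_restrict_range_sub_one hσ)).trans (pow_dvd_pow_of_dvd hindex (p - 1))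
  rw [← pow_mul, Nat.pow_dvd_pow_iff_le_right hp.out.one_lt] at hdvd
  calc finrank ℤ U ≤ finrank ℤ (σ - 1).ker * (p - 1) + finrank ℤ (σ - 1).ker := by omega
    _ = finrank ℤ (σ - 1).ker * p := by
      rw [← Nat.mul_succ, Nat.succ_eq_add_one, Nat.sub_add_cancel hp.out.one_le]

end CyclicAction

section StableIdeals

open scoped TensorProduct

variable {B G : Type*} [CommRing B] [Group G] [MulSemiringAction G B]

/-- The ring homomorphism `B ⊗ B → B`, `x ⊗ y ↦ x * g • y`.  Elements of `B ⊗ B` serve as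
functions on `G` through their values under these homomorphisms. -/
noncomputable def mulSMulHom (g : G) : B ⊗[ℤ] B →+* B :=
  (Algebra.TensorProduct.lift (AlgHom.id ℤ B) (MulSemiringAction.toRingHom G B g).toIntAlgHom
    fun _ _ => Commute.all _ _).toRingHom

@[simp]
lemma mulSMulHom_tmul (g : G) (x y : B) : mulSMulHom g (x ⊗ₜ[ℤ] y) = x * g • y :=
  Algebra.TensorProduct.lift_tmul _ _ _ _ _

lemma exists_mulSMulHom_one_eq_one_eq_zero {g : G}
    (hg : Ideal.span (Set.range fun b : B => g • b - b) = ⊤) :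
    ∃ t : B ⊗[ℤ] B, mulSMulHom (1 : G) t = 1 ∧ mulSMulHom g t = 0 := by
  have hsurj : Function.Surjective (mulSMulHom (B := B) (1 : G)) := fun b => ⟨b ⊗ₜ 1, by simp⟩
  have htop : (RingHom.ker (mulSMulHom (B := B) g)).map (mulSMulHom (1 : G)) = ⊤ := by
    rw [eq_top_iff, ← hg, Ideal.span_le]
    rintro _ ⟨b, rfl⟩
    rw [SetLike.mem_coe, Ideal.mem_map_iff_of_surjective _ hsurj]
    exact ⟨(g • b) ⊗ₜ 1 - 1 ⊗ₜ b, by simp [RingHom.mem_ker], by simp⟩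
  obtain ⟨t, ht, ht1⟩ :=
    (Ideal.mem_map_iff_of_surjective _ hsurj).mp (htop ▸ Submodule.mem_top (x := (1 : B)))
  exact ⟨t, ht1, ht⟩

lemma exists_mulSMulHom_eq_ite [Finite G] [DecidableEq G]
    (h : ∀ g : G, g ≠ 1 → Ideal.span (Set.range fun b : B => g • b - b) = ⊤) :
    ∃ t : B ⊗[ℤ] B, ∀ g : G, mulSMulHom g t = if g = 1 then 1 else 0 := by
  have := Fintype.ofFinite G
  choose! t ht1 ht0 using fun g hg => exists_mulSMulHom_one_eq_one_eq_zero (h g hg)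
  refine ⟨∏ k ∈ Finset.univ.erase 1, t k, fun g => ?_⟩
  rw [map_prod]
  split_ifs with hg
  · rw [hg]
    exact Finset.prod_eq_one fun k hk => ht1 k (Finset.ne_of_mem_erase hk)
  · exact Finset.prod_eq_zero (Finset.mem_erase.mpr ⟨hg, Finset.mem_univ g⟩) (ht0 g hg)

lemma sum_mulSMulHom_mul_smul_mem_span_invariants [Fintype G] {I : Ideal B}
    (hI : ∀ g : G, ∀ b ∈ I, g • b ∈ I) {b : B} (hb : b ∈ I) (t : B ⊗[ℤ] B) :
    ∑ g : G, mulSMulHom g t * g • b ∈ Ideal.span {b | b ∈ I ∧ ∀ g : G, g • b = b} := by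
  induction t using TensorProduct.induction_on with
  | zero => simp
  | add t u ht hu => simpa [add_mul, Finset.sum_add_distrib] using Ideal.add_mem _ ht hu
  | tmul x y =>
    simp only [mulSMulHom_tmul, mul_assoc, ← smul_mul', ← Finset.mul_sum]
    refine Ideal.mul_mem_left _ _ (Ideal.subset_span ⟨?_, fun k => ?_⟩)
    · exact Ideal.sum_mem _ fun g _ => hI g _ (I.mul_mem_left y hb)
    · simp only [Finset.smul_sum, smul_smul]
      exact Fintype.sum_equiv (Equiv.mulLeft k) _ _ fun _ => rfl

-- Chase–Harrison–Rosenberg: the hypothesis says that no `g ≠ 1` acts trivially modulo a maximal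
-- ideal, so some `t ∈ B ⊗ B` is the indicator function of `1` and `b = ∑ g, t g * g • b`.
theorem le_span_invariants [Finite G]
    (h : ∀ g : G, g ≠ 1 → Ideal.span (Set.range fun b : B => g • b - b) = ⊤)
    {I : Ideal B} (hI : ∀ g : G, ∀ b ∈ I, g • b ∈ I) :
    I ≤ Ideal.span {b | b ∈ I ∧ ∀ g : G, g • b = b} := by
  classical
  have := Fintype.ofFinite G
  obtain ⟨t, ht⟩ := exists_mulSMulHom_eq_ite h
  intro b hb
  simpa [ht] using sum_mulSMulHom_mul_smul_mem_span_invariants hI hb t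

end StableIdeals

section CyclicUnits

variable {F N : Type*} [Field F] [Field N] [Algebra F N]

/-- The action of a Galois automorphism on the unit group of a number field, written additively
so that it is an endomorphism of a `ℤ`-module. -/
noncomputable def unitsGalEnd (g : Gal(N/F)) : Module.End ℤ (Additive (𝓞 N)ˣ) :=
  (MonoidHom.toAdditive
    (Units.map (MulSemiringAction.toRingHom Gal(N/F) (𝓞 N) g : 𝓞 N →* 𝓞 N))).toIntLinearMap

lemma coe_toMul_unitsGalEnd (g : Gal(N/F)) (u : Additive (𝓞 N)ˣ) :
    ((unitsGalEnd g u).toMul : 𝓞 N) = g • (u.toMul : 𝓞 N) := rfl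

lemma unitsGalEnd_pow (g : Gal(N/F)) (i : ℕ) : unitsGalEnd g ^ i = unitsGalEnd (g ^ i) := by
  refine LinearMap.ext fun u => Additive.toMul.injective (Units.ext ?_)
  induction i with
  | zero => simp [coe_toMul_unitsGalEnd]
  | succ i ih =>
    rw [pow_succ', Module.End.mul_apply, coe_toMul_unitsGalEnd, ih, coe_toMul_unitsGalEnd,
      coe_toMul_unitsGalEnd, pow_succ', mul_smul]

variable [NumberField F] [NumberField N] [IsGalois F N] {g : Gal(N/F)}

lemma exists_algebraMap_eq_of_generator_smul_eq (hg : ∀ k, k ∈ Subgroup.zpowers g) {x : 𝓞 N}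
    (hx : g • x = x) : ∃ a : 𝓞 F, algebraMap (𝓞 F) (𝓞 N) a = x := by
  have hstab : Subgroup.zpowers g ≤ MulAction.stabilizer Gal(N/F) x := by
    rwa [Subgroup.zpowers_le]
  exact Algebra.IsInvariant.isInvariant (G := Gal(N/F)) x fun k => hstab (hg k)

lemma prod_pow_smul_eq_norm (hg : ∀ k, k ∈ Subgroup.zpowers g) (x : 𝓞 N) :
    ∏ i ∈ Finset.range (orderOf g), g ^ i • x =
      algebraMap (𝓞 F) (𝓞 N) (RingOfIntegers.norm F x) := by
  let e : Fin (orderOf g) ≃ Gal(N/F) :=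
    (finEquivZPowers (isOfFinOrder_of_finite g)).trans (Equiv.subtypeUnivEquiv hg)
  apply RingOfIntegers.ext
  rw [RingOfIntegers.coe_algebraMap_norm, Algebra.norm_eq_prod_automorphisms,
    ← Fin.prod_univ_eq_prod_range (fun i => g ^ i • x)]
  change algebraMap (𝓞 N) N _ = _
  rw [map_prod]
  exact Fintype.prod_equiv e _ _ fun i => rfl

lemma coe_toMul_geom_sum_unitsGalEnd (hg : ∀ k, k ∈ Subgroup.zpowers g)
    (u : Additive (𝓞 N)ˣ) :
    ((((∑ i ∈ Finset.range (orderOf g), unitsGalEnd g ^ i) u).toMul : (𝓞 N)ˣ) : 𝓞 N) =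
      algebraMap (𝓞 F) (𝓞 N) (RingOfIntegers.norm F (u.toMul : 𝓞 N)) := by
  rw [← prod_pow_smul_eq_norm hg, LinearMap.sum_apply, toMul_sum, Units.coe_prod]
  simp only [unitsGalEnd_pow, coe_toMul_unitsGalEnd]

lemma finrank_ker_unitsGalEnd_sub_one_le (hg : ∀ k, k ∈ Subgroup.zpowers g) :
    finrank ℤ (unitsGalEnd g - 1).ker ≤ Units.rank F := by
  let ι : Additive (𝓞 F)ˣ →ₗ[ℤ] Additive (𝓞 N)ˣ :=
    (MonoidHom.toAdditive (Units.map (algebraMap (𝓞 F) (𝓞 N) : 𝓞 F →* 𝓞 N))).toIntLinearMap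
  rw [← Units.finrank_eq F]
  refine (Submodule.finrank_mono fun u hu => ?_).trans (LinearMap.finrank_range_le ι)
  obtain ⟨a, ha⟩ := exists_algebraMap_eq_of_generator_smul_eq hg (x := (u.toMul : 𝓞 N)) <| by
    rw [← coe_toMul_unitsGalEnd, mem_ker_sub_one_iff.mp hu]
  have hunit : IsUnit a := isUnit_of_map_unit (algebraMap (𝓞 F) (𝓞 N)) a (ha ▸ u.toMul.isUnit)
  exact ⟨Additive.ofMul hunit.unit, Additive.toMul.injective (Units.ext ha)⟩

lemma rank_mul_finrank_lt_rank (hodd : Odd (finrank F N)) (hone : 1 < finrank F N) :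
    Units.rank F * finrank F N < Units.rank N := by
  have := IsUnramifiedAtInfinitePlaces_of_odd_finrank (k := F) (K := N) hodd
  have hpos : 0 < Fintype.card (InfinitePlace F) := Fintype.card_pos
  rw [Units.rank, Units.rank, IsUnramifiedAtInfinitePlaces.card_infinitePlace F N, Nat.sub_mul,
    one_mul]
  have := Nat.le_mul_of_pos_left (finrank F N) hpos
  omega

-- Otherwise the unit rank of `N` would be at most `p` times that of `F`, but no infinite place
-- ramifies in an extension of odd degree.
theorem exists_unit_norm_eq_one_forall_mul_smul_ne [hp : Fact (finrank F N).Prime]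
    (hodd : Odd (finrank F N)) (htors : ∀ x : 𝓞 F, x ^ finrank F N = 1 → x = 1)
    (hg : ∀ k, k ∈ Subgroup.zpowers g) :
    ∃ u : (𝓞 N)ˣ, RingOfIntegers.norm F (u : 𝓞 N) = 1 ∧
      ∀ v : (𝓞 N)ˣ, (u : 𝓞 N) * g • (v : 𝓞 N) ≠ v := by
  have ho : orderOf g = finrank F N := by
    rw [orderOf_eq_card_of_forall_mem_zpowers hg, IsGalois.card_aut_eq_finrank]
  by_contra! hdiv
  have hσ : unitsGalEnd g ^ finrank F N = 1 := by
    rw [unitsGalEnd_pow, ← ho, pow_orderOf_eq_one, ← pow_zero g, ← unitsGalEnd_pow, pow_zero]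
  refine (rank_mul_finrank_lt_rank hodd hp.out.one_lt).not_ge ?_
  rw [← Units.finrank_eq N]
  refine (finrank_le_finrank_fixed_mul hσ ?_ ?_).trans
    (Nat.mul_le_mul_right _ (finrank_ker_unitsGalEnd_sub_one_le hg))
  · intro u hu hpu
    obtain ⟨a, ha⟩ := exists_algebraMap_eq_of_generator_smul_eq hg (x := (u.toMul : 𝓞 N)) <| by
      rw [← coe_toMul_unitsGalEnd, hu]
    have hpow : (u.toMul : 𝓞 N) ^ finrank F N = 1 := by
      simpa using congrArg (fun x : Additive (𝓞 N)ˣ => (x.toMul : 𝓞 N)) hpu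
    have ha1 : a = 1 := htors a <| FaithfulSMul.algebraMap_injective (𝓞 F) (𝓞 N) <| by
      rw [map_pow, ha, hpow, map_one]
    refine Additive.toMul.injective (Units.ext ?_)
    rw [← ha, ha1, map_one, toMul_zero, Units.val_one]
  · intro u hu
    have hnorm := coe_toMul_geom_sum_unitsGalEnd hg u
    rw [ho, LinearMap.mem_ker.mp hu, toMul_zero, Units.val_one, ← map_one (algebraMap (𝓞 F) _)]
      at hnorm
    obtain ⟨v, hv⟩ := hdiv u.toMul (FaithfulSMul.algebraMap_injective (𝓞 F) (𝓞 N) hnorm.symm)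
    refine ⟨-Additive.ofMul v, ?_⟩
    rw [LinearMap.sub_apply, map_neg, Module.End.one_apply, sub_neg_eq_add, neg_add_eq_iff_eq_add]
    refine Additive.toMul.injective (Units.ext ?_)
    rw [toMul_add, Units.val_mul, coe_toMul_unitsGalEnd, mul_comm]
    exact hv.symm

end CyclicUnits

section Capitulation

lemma dvd_classNumber_of_pow_isPrincipal {F : Type*} [Field F] [NumberField F] {p : ℕ}
    [hp : Fact p.Prime] {J : Ideal (𝓞 F)} (hJ : J ≠ ⊥) (hJp : (J ^ p).IsPrincipal)
    (hJnp : ¬ J.IsPrincipal) : p ∣ classNumber F := by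
  let J' : nonZeroDivisors (Ideal (𝓞 F)) := ⟨J, mem_nonZeroDivisors_of_ne_zero hJ⟩
  have horder : orderOf (ClassGroup.mk0 J') = p := by
    refine orderOf_eq_prime ?_ (mt (ClassGroup.mk0_eq_one_iff J'.2).mp hJnp)
    rw [← map_pow, ClassGroup.mk0_eq_one_iff]
    exact hJp
  rw [← horder, classNumber]
  exact orderOf_dvd_card

variable {F N : Type} [Field F] [Field N] [Algebra F N] {g : Gal(N/F)}

lemma associated_smul_of_generator (hg : ∀ k, k ∈ Subgroup.zpowers g) {ε : 𝓞 N}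
    (h : Associated (g • ε) ε) (k : Gal(N/F)) : Associated (k • ε) ε := by
  have hmap (a : Gal(N/F)) {x y : 𝓞 N} (hxy : Associated x y) : Associated (a • x) (a • y) :=
    hxy.map (MulSemiringAction.toRingHom Gal(N/F) (𝓞 N) a)
  let S : Subgroup Gal(N/F) :=
    { carrier := {k | Associated (k • ε) ε}
      one_mem' := by simp
      mul_mem' := fun {a b} ha hb => by
        rw [Set.mem_ofPred_eq, mul_smul]
        exact (hmap a hb).trans ha
      inv_mem' := fun {a} ha => by simpa using (hmap a⁻¹ ha).symm }
  have hle : Subgroup.zpowers g ≤ S := by rwa [Subgroup.zpowers_le]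
  exact hle (hg k)

variable [NumberField F] [NumberField N] [IsGalois F N]

lemma exists_ne_zero_mul_smul_eq_of_norm_eq_one (hg : ∀ k, k ∈ Subgroup.zpowers g) {u : 𝓞 N}
    (hu : RingOfIntegers.norm F u = 1) : ∃ ε : 𝓞 N, ε ≠ 0 ∧ u * g • ε = ε := by
  have : IsCyclic Gal(N/F) := ⟨g, hg⟩
  obtain ⟨ε, hε0, hε⟩ := groupCohomology.exists_mul_galRestrict_of_norm_eq_one (A := 𝓞 F)
    (K := F) (L := N) (B := 𝓞 N) hg (η := u) (by simpa using congrArg (algebraMap (𝓞 F) F) hu)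
  have hgal : galRestrict (𝓞 F) F N (𝓞 N) g ε = g • ε :=
    RingOfIntegers.ext (algebraMap_galRestrict_apply (𝓞 F) g ε)
  exact ⟨ε, hε0, by rwa [hgal] at hε⟩

-- Hilbert's Theorem 94.  Hilbert 90 writes a unit of norm `1` as `ε / g ε`; the ideal `(ε)` is then
-- Galois stable, and the ideal of `F` below it cannot be principal unless `ε` could be a unit.
theorem finrank_dvd_classNumber_of_forall_stable_ideal [hp : Fact (finrank F N).Prime]
    (hodd : Odd (finrank F N)) (htors : ∀ x : 𝓞 F, x ^ finrank F N = 1 → x = 1)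
    (hstable : ∀ I : Ideal (𝓞 N), (∀ g : Gal(N/F), ∀ b ∈ I, g • b ∈ I) →
      ∃ J : Ideal (𝓞 F), J.map (algebraMap (𝓞 F) (𝓞 N)) = I) :
    finrank F N ∣ classNumber F := by
  have hcard : Nat.card Gal(N/F) = finrank F N := IsGalois.card_aut_eq_finrank F N
  have : IsCyclic Gal(N/F) := isCyclic_of_prime_card hcard
  obtain ⟨g, hg⟩ := IsCyclic.exists_generator (α := Gal(N/F))
  have ho : orderOf g = finrank F N := by rw [orderOf_eq_card_of_forall_mem_zpowers hg, hcard]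
  obtain ⟨u, hu, hu_ne⟩ := exists_unit_norm_eq_one_forall_mul_smul_ne hodd htors hg
  obtain ⟨ε, hε0, hε⟩ := exists_ne_zero_mul_smul_eq_of_norm_eq_one hg hu
  have hassoc := associated_smul_of_generator hg (ε := ε) ⟨u, by rw [mul_comm, hε]⟩
  obtain ⟨J, hJ⟩ := hstable (Ideal.span {ε}) fun k b hb => by
    obtain ⟨c, rfl⟩ := Ideal.mem_span_singleton.mp hb
    rw [Ideal.mem_span_singleton, smul_mul']
    exact (hassoc k).symm.dvd.mul_right _
  refine dvd_classNumber_of_pow_isPrincipal (J := J) ?_ ⟨RingOfIntegers.norm F ε, ?_⟩ ?_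
  · rintro rfl
    rw [Ideal.map_bot, eq_comm, Ideal.span_singleton_eq_bot] at hJ
    exact hε0 hJ
  · apply Ideal.map_injective_of_faithfullyFlat (A := 𝓞 F) (B := 𝓞 N)
    rw [Ideal.submodule_span_eq, Ideal.map_pow, hJ, Ideal.map_span, Set.image_singleton,
      Ideal.span_singleton_pow, Ideal.span_singleton_eq_span_singleton,
      ← prod_pow_smul_eq_norm hg, ho]
    simpa using Associated.prod (Finset.range (finrank F N)) (fun _ => ε) (fun i => g ^ i • ε)
      fun i _ => (hassoc _).symm
  · rintro ⟨a, rfl⟩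
    rw [Ideal.submodule_span_eq, Ideal.map_span, Set.image_singleton,
      Ideal.span_singleton_eq_span_singleton] at hJ
    obtain ⟨v, rfl⟩ := hJ
    rw [smul_mul', smul_algebraMap, mul_left_comm] at hε
    exact hu_ne v (mul_left_cancel₀ (left_ne_zero_of_mul hε0) hε)

end Capitulation

section Descent

variable {F H : Type} [Field F] [Field H] [Algebra F H]

lemma smul_mem_map_of_stable {N : IntermediateField F H} [IsGalois F N] {I : Ideal (𝓞 N)}
    (hI : ∀ g : Gal(N/F), ∀ b ∈ I, g • b ∈ I) (g : Gal(H/F)) {b : 𝓞 H}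
    (hb : b ∈ I.map (algebraMap (𝓞 N) (𝓞 H))) : g • b ∈ I.map (algebraMap (𝓞 N) (𝓞 H)) := by
  induction hb using Submodule.span_induction with
  | mem x hx =>
    obtain ⟨c, hc, rfl⟩ := hx
    have hrestrict : g • algebraMap (𝓞 N) (𝓞 H) c =
        algebraMap (𝓞 N) (𝓞 H) (g.restrictNormal N • c) :=
      RingOfIntegers.ext (AlgEquiv.restrictNormal_commutes g N (c : N)).symm
    rw [hrestrict]
    exact Ideal.mem_map_of_mem _ (hI _ _ hc)
  | zero => simp
  | add x y _ _ hx hy => rw [smul_add]; exact Ideal.add_mem _ hx hy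
  | smul a x _ hx => rw [smul_eq_mul, smul_mul']; exact Ideal.mul_mem_left _ _ hx

variable [NumberField F] [NumberField H] [IsGalois F H]

lemma map_comap_eq_of_stable
    (hram : ∀ g : Gal(H/F), g ≠ 1 → Ideal.span (Set.range fun b : 𝓞 H => g • b - b) = ⊤)
    {I : Ideal (𝓞 H)} (hI : ∀ g : Gal(H/F), ∀ b ∈ I, g • b ∈ I) :
    (I.comap (algebraMap (𝓞 F) (𝓞 H))).map (algebraMap (𝓞 F) (𝓞 H)) = I := by
  refine le_antisymm Ideal.map_comap_le ((le_span_invariants hram hI).trans (Ideal.span_le.mpr ?_))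
  rintro b ⟨hb, hfix⟩
  obtain ⟨a, rfl⟩ := Algebra.IsInvariant.isInvariant (A := 𝓞 F) (G := Gal(H/F)) b hfix
  exact Ideal.mem_map_of_mem _ hb

theorem index_dvd_classNumber (C : Subgroup Gal(H/F)) [C.Normal] [Fact C.index.Prime]
    (hodd : Odd C.index) (htors : ∀ x : 𝓞 F, x ^ C.index = 1 → x = 1)
    (hram : ∀ g : Gal(H/F), g ≠ 1 → Ideal.span (Set.range fun b : 𝓞 H => g • b - b) = ⊤) :
    C.index ∣ classNumber F := by
  let N := fixedField C
  have : IsGalois F N := IsGalois.of_fixedField_normal_subgroup C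
  have : NumberField N := NumberField.of_intermediateField N
  have hdeg : finrank F N = C.index := by
    rw [finrank_eq_fixingSubgroup_index, fixingSubgroup_fixedField]
  rw [← hdeg] at hodd htors ⊢
  have : Fact (finrank F N).Prime := hdeg ▸ ‹_›
  refine finrank_dvd_classNumber_of_forall_stable_ideal hodd htors fun I hI => ?_
  have hmap := map_comap_eq_of_stable hram fun g _ => smul_mem_map_of_stable hI g
  rw [IsScalarTower.algebraMap_eq (𝓞 F) (𝓞 N) (𝓞 H), ← Ideal.map_map] at hmap
  exact ⟨_, Ideal.map_injective_of_faithfullyFlat hmap⟩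

end Descent

lemma exists_subgroup_index_eq_of_prime_dvd_card {G : Type*} [Group G] [Finite G]
    [IsMulCommutative G] {p : ℕ} [hp : Fact p.Prime] (hdvd : p ∣ Nat.card G) :
    ∃ C : Subgroup G, C.index = p := by
  open scoped IsMulCommutative in
  obtain ⟨y, hy⟩ := exists_prime_orderOf_dvd_card' p hdvd
  have hpow_ne_top : (powMonoidHom p : G →* G).range ≠ ⊤ := by
    rw [Ne, MonoidHom.range_eq_top, ← Finite.injective_iff_surjective]
    intro hinj
    have hy1 : y = 1 := hinj (by simp [← hy, pow_orderOf_eq_one])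
    rw [hy1, orderOf_one] at hy
    exact hp.out.one_lt.ne hy
  obtain ⟨C, hC, hpow_le⟩ := (eq_top_or_exists_le_coatom _).resolve_left hpow_ne_top
  obtain ⟨x, hx⟩ := not_forall.mp (mt (Subgroup.eq_top_iff' C).mpr hC.1)
  have horder : orderOf (x : G ⧸ C) = p := by
    refine orderOf_eq_prime ?_ (by rwa [Ne, QuotientGroup.eq_one_iff])
    rw [← QuotientGroup.mk_pow, QuotientGroup.eq_one_iff]
    exact hpow_le ⟨x, rfl⟩
  have hgen : Subgroup.zpowers (x : G ⧸ C) = ⊤ := by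
    apply Subgroup.comap_injective (QuotientGroup.mk'_surjective C)
    refine hC.2 _ (lt_of_le_of_ne (QuotientGroup.le_comap_mk' _ _) fun h => hx ?_)
    rw [h]
    exact Subgroup.mem_zpowers _
  exact ⟨C, by rw [Subgroup.index, ← orderOf_eq_card_of_zpowers_eq_top hgen, horder]⟩

section Integrality

variable {R : Type*} [CommRing R] [IsDomain R] [IsIntegrallyClosed R]

lemma dvd_of_pow_card_dvd_prod_add_mul {ι : Type*} {t : Finset ι} (ht : t.Nonempty) {a b : R}
    {c : ι → R} (h : a ^ t.card ∣ ∏ i ∈ t, (b + a * c i)) : a ∣ b := by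
  rcases eq_or_ne a 0 with rfl | ha
  · simpa [ht.card_ne_zero] using h
  obtain ⟨e, he⟩ := h
  let K := FractionRing R
  have ha' : algebraMap R K a ≠ 0 := by simpa using ha
  have hint : IsIntegral R (algebraMap R K b / algebraMap R K a) := by
    refine ⟨∏ i ∈ t, (X + C (c i)) - C e, ?_, ?_⟩
    · refine (monic_prod_of_monic _ _ fun i _ => monic_X_add_C _).sub_of_left
        (degree_C_le.trans_lt ?_)
      simpa [degree_prod] using ht
    · rw [eval₂_sub, eval₂_finsetProd, eval₂_C, sub_eq_zero]
      refine mul_left_cancel₀ (pow_ne_zero t.card ha') ?_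
      rw [← Finset.prod_const, ← Finset.prod_mul_distrib, Finset.prod_const, ← map_pow, ← map_mul,
        ← he, map_prod]
      refine Finset.prod_congr rfl fun i _ => ?_
      rw [eval₂_add, eval₂_X, eval₂_C, mul_add, mul_div_cancel₀ _ ha', map_add, map_mul]
  obtain ⟨y, hy⟩ := IsIntegrallyClosed.isIntegral_iff.mp hint
  refine ⟨y, FaithfulSMul.algebraMap_injective R K ?_⟩
  rw [map_mul, hy, mul_div_cancel₀ _ ha']

lemma sub_one_dvd_sub_one_of_pow_dvd {n : ℕ} [NeZero n] {ζ θ : R} (hζ : IsPrimitiveRoot ζ n)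
    (h : (ζ - 1) ^ n ∣ θ ^ n - 1) : ζ - 1 ∣ θ - 1 := by
  have hdvd (z : R) (hz : z ∈ nthRootsFinset n (1 : R)) : ∃ c, 1 - z = (ζ - 1) * c := by
    rw [mem_nthRootsFinset (NeZero.pos n)] at hz
    obtain ⟨i, -, rfl⟩ := hζ.eq_pow_of_pow_eq_one hz
    exact dvd_sub_comm.mp (by simpa using sub_dvd_pow_sub_pow ζ 1 i)
  choose! c hc using hdvd
  refine dvd_of_pow_card_dvd_prod_add_mul (t := nthRootsFinset n (1 : R)) (c := c)
    (Finset.card_pos.mp (by rw [hζ.card_nthRootsFinset]; exact NeZero.pos n)) ?_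
  rw [hζ.card_nthRootsFinset]
  have hprod := hζ.pow_sub_pow_eq_prod_sub_mul θ 1 (NeZero.pos n)
  rw [one_pow] at hprod
  convert h using 1
  rw [hprod]
  refine Finset.prod_congr rfl fun z hz => ?_
  rw [← hc z hz]
  ring

end Integrality

lemma neg_mul_sq_mul_neg_mul_sq_eq_one {R : Type*} [CommRing R] {s T E : R} (hs : s ^ 2 = 1)
    (hE : E * (T - E) = s) : -s * E ^ 2 * (-s * (T - E) ^ 2) = 1 := by
  linear_combination (s ^ 2 + 1) * hs + s ^ 2 * (E * (T - E) + s) * hE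

section GaloisAction

lemma eq_of_sub_inv_eq_sub_inv {H : Type*} [Field H] [NeZero (2 : H)] {n : ℕ} (hodd : Odd n)
    {x y : H} (hx : x ^ n = 1) (hy : y ^ n = 1) (h : x - x⁻¹ = y - y⁻¹) : x = y := by
  have hx0 : x ≠ 0 := by rintro rfl; simp [hodd.pos.ne'] at hx
  have hy0 : y ≠ 0 := by rintro rfl; simp [hodd.pos.ne'] at hy
  have hmul : (x - y) * (x * y + 1) = 0 := by
    field_simp at h
    linear_combination h
  refine sub_eq_zero.mp ((mul_eq_zero.mp hmul).resolve_right fun hxy => two_ne_zero (α := H) ?_)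
  have hneg : (x * y) ^ n = -1 := by rw [eq_neg_of_add_eq_zero_left hxy, hodd.neg_one_pow]
  rw [mul_pow, hx, hy, one_mul] at hneg
  linear_combination hneg

variable {F H : Type*} [Field F] [Field H] [Algebra F H] {n : ℕ} {ζ θ D E T s : H}

lemma exists_units_apply_eq_zpow [NeZero (2 : H)] (hodd : Odd n) (hζ : ζ ^ n = 1) (hD0 : D ≠ 0)
    (hD : D ^ 2 ∈ (algebraMap F H).range) (hw : (ζ - ζ⁻¹) * D ∈ (algebraMap F H).range)
    (g : Gal(H/F)) : ∃ ε : ℤˣ, g ζ = ζ ^ (ε : ℤ) ∧ g D = (ε : ℤ) * D := by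
  have hgζ : g ζ ^ n = 1 := by rw [← map_pow, hζ, map_one]
  have hgD : g D = D ∨ g D = -D := by
    obtain ⟨a, ha⟩ := hD
    rw [← sq_eq_sq_iff_eq_or_eq_neg, ← map_pow, ← ha, g.commutes]
  have hgw : (g ζ - (g ζ)⁻¹) * g D = (ζ - ζ⁻¹) * D := by
    obtain ⟨a, ha⟩ := hw
    rw [← map_inv₀, ← map_sub, ← map_mul, ← ha, g.commutes]
  rcases hgD with hgD | hgD <;> rw [hgD] at hgw
  · refine ⟨1, ?_, by simp [hgD]⟩
    rw [Units.val_one, zpow_one]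
    exact eq_of_sub_inv_eq_sub_inv hodd hgζ hζ (mul_right_cancel₀ hD0 hgw)
  · refine ⟨-1, ?_, by simp [hgD]⟩
    rw [Units.val_neg, Units.val_one, zpow_neg_one]
    refine eq_of_sub_inv_eq_sub_inv hodd hgζ (by rw [inv_pow, hζ, inv_one])
      (mul_right_cancel₀ hD0 ?_)
    rw [inv_inv]
    linear_combination -hgw

lemma exists_pow_mul_of_apply_pow_eq [NeZero n] (hζ : IsPrimitiveRoot ζ n) (hθ : θ ≠ 0)
    {g : Gal(H/F)} {ε : ℤ} (h : g (θ ^ n) = (θ ^ n) ^ ε) : ∃ k < n, g θ = ζ ^ k * θ ^ ε := by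
  have hθε : θ ^ ε ≠ 0 := zpow_ne_zero _ hθ
  have hquot : (g θ / θ ^ ε) ^ n = 1 := by
    rw [div_pow, ← map_pow, h, ← zpow_natCast (θ ^ ε), zpow_comm, zpow_natCast,
      div_self (zpow_ne_zero _ (pow_ne_zero _ hθ))]
  obtain ⟨k, hk, hkθ⟩ := hζ.eq_pow_of_pow_eq_one hquot
  exact ⟨k, hk, by rw [hkθ, div_mul_cancel₀ _ hθε]⟩

lemma eq_of_apply_eq_of_adjoin_pair_eq_top (hgen : F⟮ζ, θ⟯ = ⊤) {g h : Gal(H/F)}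
    (hζ : g ζ = h ζ) (hθ : g θ = h θ) : g = h := by
  ext x
  have hx : x ∈ F⟮ζ, θ⟯ := hgen ▸ mem_top
  induction hx using adjoin_induction with
  | mem x hx => rcases hx with rfl | rfl <;> assumption
  | algebraMap x => simp
  | add x y _ _ hx hy => rw [map_add, map_add, hx, hy]
  | inv x _ hx => rw [map_inv₀, map_inv₀, hx]
  | mul x y _ _ hx hy => rw [map_mul, map_mul, hx, hy]

lemma isMulCommutative_of_apply_eq_zpow (hgen : F⟮ζ, θ⟯ = ⊤)
    (hact : ∀ g : Gal(H/F), ∃ ε : ℤ, g ζ = ζ ^ ε ∧ ∃ k : ℕ, g θ = ζ ^ k * θ ^ ε) :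
    IsMulCommutative Gal(H/F) := by
  refine ⟨⟨fun g h => ?_⟩⟩
  obtain ⟨ε, hgζ, k, hgθ⟩ := hact g
  obtain ⟨δ, hhζ, l, hhθ⟩ := hact h
  apply eq_of_apply_eq_of_adjoin_pair_eq_top hgen
  · simp only [AlgEquiv.mul_apply, hgζ, hhζ, map_zpow₀, ← zpow_mul, mul_comm]
  · simp only [AlgEquiv.mul_apply, hgζ, hgθ, hhζ, hhθ, map_zpow₀, map_mul, mul_zpow,
      ← zpow_mul, ← zpow_natCast]
    rw [mul_comm δ ε, mul_comm (l : ℤ), mul_comm (k : ℤ)]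
    ring

lemma apply_neg_mul_sq_eq_zpow [NeZero (2 : H)] (hs : s ^ 2 = 1) (hE : E * (T - E) = s)
    {g : Gal(H/F)} (hgs : g s = s) (hgT : g T = T) {ε : ℤˣ}
    (hg : g (2 * E - T) = (ε : ℤ) * (2 * E - T)) :
    g (-s * E ^ 2) = (-s * E ^ 2) ^ (ε : ℤ) := by
  have hgE : 2 * g E - T = (ε : ℤ) * (2 * E - T) := by
    rwa [map_sub, map_mul, map_ofNat, hgT] at hg
  have h2 : (2 : H) ≠ 0 := two_ne_zero
  simp only [map_mul, map_neg, map_pow, hgs]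
  rcases Int.units_eq_one_or ε with rfl | rfl
  · have hE' : g E = E := by
      rw [Units.val_one, Int.cast_one] at hgE
      exact mul_left_cancel₀ h2 (by linear_combination hgE)
    simp [hE']
  · have hE' : g E = T - E := by
      rw [Units.val_neg, Units.val_one, Int.cast_neg, Int.cast_one] at hgE
      exact mul_left_cancel₀ h2 (by linear_combination hgE)
    rw [hE', Units.val_neg, Units.val_one, zpow_neg_one]
    exact eq_inv_of_mul_eq_one_right (neg_mul_sq_mul_neg_mul_sq_eq_one hs hE)

end GaloisAction

section Ramification

variable {F H : Type*} [Field F] [Field H] [NumberField H] [Algebra F H] {p : ℕ} {ζ θ E : 𝓞 H}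

lemma sub_one_pow_dvd_natCast {R : Type*} [CommRing R] [IsDomain R] {k n : ℕ} {ζ : R}
    (hζ : IsPrimitiveRoot ζ n) (hk : k < n) : (ζ - 1) ^ k ∣ (n : R) := by
  obtain ⟨z, -, hz⟩ := hζ.self_sub_one_pow_dvd_order hk
  exact ⟨z, by rw [hz, mul_comm]⟩

-- As `(ζ - 1) ^ p ∣ p ^ 2`, the Kummer generator `(θ - 1) / (ζ - 1)` is integral, and `g` moves it
-- by a unit.
lemma span_smul_sub_eq_top_of_kummer (hp : p.Prime) (hζ : IsPrimitiveRoot ζ p)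
    (hθ : IsUnit θ) (hpθ : (p : 𝓞 H) ^ 2 ∣ θ ^ p - 1) {g : Gal(H/F)} (hgζ : g • ζ = ζ) {k : ℕ}
    (hgθ : g • θ = ζ ^ k * θ) (hk : k.Coprime p) :
    Ideal.span (Set.range fun b : 𝓞 H => g • b - b) = ⊤ := by
  have : NeZero p := ⟨hp.ne_zero⟩
  have hdvd : (ζ - 1) ^ p ∣ θ ^ p - 1 := calc
    (ζ - 1) ^ p ∣ ((ζ - 1) ^ (p - 1)) ^ 2 := by
      rw [← pow_mul]
      exact pow_dvd_pow _ (by have := hp.two_le; omega)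
    _ ∣ (p : 𝓞 H) ^ 2 :=
      pow_dvd_pow_of_dvd (sub_one_pow_dvd_natCast hζ (Nat.pred_lt hp.ne_zero)) 2
    _ ∣ θ ^ p - 1 := hpθ
  obtain ⟨x, hx⟩ := sub_one_dvd_sub_one_of_pow_dvd hζ hdvd
  obtain ⟨u, hu⟩ := hζ.associated_sub_one_pow_sub_one_of_coprime hk
  have hgx : g • x - x = u * θ := by
    have hsmul := congrArg (g • ·) hx
    simp only [smul_sub, smul_mul', smul_one, hgθ, hgζ] at hsmul
    apply mul_left_cancel₀ (sub_ne_zero.mpr (hζ.ne_one hp.one_lt))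
    linear_combination hx - hsmul - θ * hu
  exact Ideal.eq_top_of_isUnit_mem _ (Ideal.subset_span ⟨x, hgx⟩) (u.isUnit.mul hθ)

lemma span_smul_sub_eq_top_of_smul_eq_inv (hp : p.Prime) (hp2 : p ≠ 2) (hζ : IsPrimitiveRoot ζ p)
    {D : 𝓞 H} {m : ℤ} (hD : D ^ 2 = m) (hm : IsCoprime (p : ℤ) (2 * m)) {g : Gal(H/F)}
    (hgζ : g • ζ * ζ = 1) (hgD : g • D = -D) :
    Ideal.span (Set.range fun b : 𝓞 H => g • b - b) = ⊤ := by
  set I := Ideal.span (Set.range fun b : 𝓞 H => g • b - b)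
  have hsub (b : 𝓞 H) : g • b - b ∈ I := Ideal.subset_span ⟨b, rfl⟩
  have hp_mem : (p : 𝓞 H) ∈ I := by
    have hsq : IsPrimitiveRoot (ζ ^ 2) p :=
      hζ.pow_of_coprime 2 ((Nat.coprime_primes Nat.prime_two hp).mpr hp2.symm)
    have hdvd : ζ ^ 2 - 1 ∣ (p : 𝓞 H) := by
      simpa using sub_one_pow_dvd_natCast hsq hp.one_lt
    refine I.mem_of_dvd hdvd ?_
    convert I.mul_mem_left (-ζ) (hsub ζ) using 1
    linear_combination hgζ
  have hm_mem : ((2 * m : ℤ) : 𝓞 H) ∈ I := by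
    convert I.mul_mem_left (-D) (hsub D) using 1
    rw [hgD]
    push_cast
    linear_combination -2 * hD
  obtain ⟨a, b, hab⟩ := hm
  rw [Ideal.eq_top_iff_one]
  convert! I.add_mem (I.mul_mem_left (a : 𝓞 H) hp_mem) (I.mul_mem_left (b : 𝓞 H) hm_mem)
  exact_mod_cast hab.symm

end Ramification

lemma isCoprime_two_mul_sq_sub {p : ℕ} (hp : p.Prime) (hp2 : p ≠ 2) {s T : ℤ} (hs : s ^ 2 = 1)
    (hT : (p : ℤ) ∣ T) : IsCoprime (p : ℤ) (2 * (T ^ 2 - 4 * s)) := by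
  have hp8 : IsCoprime (p : ℤ) (2 ^ 3) :=
    Nat.isCoprime_iff_coprime.mpr (((Nat.coprime_primes hp Nat.prime_two).mpr hp2).pow_right 3)
  have hps : IsCoprime (p : ℤ) s := ⟨0, s, by linear_combination hs⟩
  obtain ⟨c, rfl⟩ := hT
  have hcop := (hp8.mul_right hps).neg_right.add_mul_left_right (2 * p * c ^ 2)
  rwa [show -(2 ^ 3 * s) + p * (2 * p * c ^ 2) = 2 * ((p * c) ^ 2 - 4 * s) by ring] at hcop

section Reflection

variable {F : Type*} [Field F] {p : ℕ} {s T : ℤ}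

lemma exists_units_apply_eq_zpow_and_pow {H : Type*} [Field H] [CharZero H] [Algebra F H]
    {ζ θ E : H} (hp : p.Prime) (hp2 : p ≠ 2) (hζ : IsPrimitiveRoot ζ p) (hs : s ^ 2 = 1)
    (hT : (p : ℤ) ∣ T) (hE : E * (T - E) = s) (hθ : θ ^ p = -s * E ^ 2)
    (hw : (ζ - ζ⁻¹) * (2 * E - T) ∈ (algebraMap F H).range) (g : Gal(H/F)) :
    ∃ ε : ℤˣ, g ζ = ζ ^ (ε : ℤ) ∧ g (2 * E - T) = (ε : ℤ) * (2 * E - T) ∧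
      ∃ k < p, g θ = ζ ^ k * θ ^ (ε : ℤ) := by
  have : NeZero p := ⟨hp.ne_zero⟩
  have hs' : (s : H) ^ 2 = 1 := by exact_mod_cast hs
  have hD : (2 * E - T) ^ 2 = ((T ^ 2 - 4 * s : ℤ) : H) := by
    push_cast
    linear_combination -4 * hE
  have hD0 : 2 * E - T ≠ 0 := by
    rw [← pow_ne_zero_iff two_ne_zero, hD, Int.cast_ne_zero]
    intro h0
    have hcop := isCoprime_two_mul_sq_sub hp hp2 hs hT
    rw [h0, mul_zero, isCoprime_zero_right] at hcop
    exact (Nat.prime_iff_prime_int.mp hp).not_isUnit hcop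
  have hθ0 : θ ≠ 0 := by
    rw [← pow_ne_zero_iff hp.ne_zero, hθ]
    exact left_ne_zero_of_mul_eq_one (neg_mul_sq_mul_neg_mul_sq_eq_one hs' hE)
  obtain ⟨ε, hgζ, hgD⟩ := exists_units_apply_eq_zpow (hp.odd_of_ne_two hp2) hζ.pow_eq_one hD0
    ⟨((T ^ 2 - 4 * s : ℤ) : F), by rw [hD, map_intCast]⟩ hw g
  refine ⟨ε, hgζ, hgD, exists_pow_mul_of_apply_pow_eq hζ hθ0 ?_⟩
  rw [hθ, apply_neg_mul_sq_eq_zpow hs' hE (map_intCast g s) (map_intCast g T) hgD]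

variable {H : Type*} [Field H] [NumberField H] [Algebra F H] {ζ θ E : 𝓞 H}

lemma span_smul_sub_eq_top_of_ne_one (hp : p.Prime) (hp2 : p ≠ 2) (hζ : IsPrimitiveRoot ζ p)
    (hs : s ^ 2 = 1) (hT : (p : ℤ) ^ 2 ∣ T) (hE : E * (T - E) = s) (hθ : θ ^ p = -s * E ^ 2)
    (hgen : F⟮(ζ : H), (θ : H)⟯ = ⊤) {g : Gal(H/F)} (hg : g ≠ 1) {ε : ℤˣ}
    (hgζ : g (ζ : H) = (ζ : H) ^ (ε : ℤ)) (hgD : g (2 * E - T) = (ε : ℤ) * (2 * (E : H) - T))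
    {k : ℕ} (hk : k < p) (hgθ : g (θ : H) = (ζ : H) ^ k * (θ : H) ^ (ε : ℤ)) :
    Ideal.span (Set.range fun b : 𝓞 H => g • b - b) = ⊤ := by
  have hs' : (s : 𝓞 H) ^ 2 = 1 := by exact_mod_cast hs
  have hsmul (b : 𝓞 H) : ((g • b : 𝓞 H) : H) = g b := rfl
  rcases Int.units_eq_one_or ε with rfl | rfl
  · have hθunit : IsUnit θ := by
      rw [← isUnit_pow_iff hp.ne_zero, hθ]
      exact .of_mul_eq_one _ (neg_mul_sq_mul_neg_mul_sq_eq_one hs' hE)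
    have hpθ : (p : 𝓞 H) ^ 2 ∣ θ ^ p - 1 := by
      obtain ⟨c, rfl⟩ := hT
      push_cast at hE
      exact ⟨-s * c * E, by linear_combination hθ + s * hE + hs'⟩
    have hk0 : k ≠ 0 := by
      rintro rfl
      refine hg (eq_of_apply_eq_of_adjoin_pair_eq_top hgen ?_ ?_)
      · simpa using hgζ
      · simpa using hgθ
    refine span_smul_sub_eq_top_of_kummer hp hζ hθunit hpθ ?_ (k := k) ?_
      (Nat.coprime_of_lt_prime hk0 hk hp).symm
    · exact RingOfIntegers.ext (by simpa [hsmul] using hgζ)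
    · exact RingOfIntegers.ext (by simpa [hsmul] using hgθ)
  · refine span_smul_sub_eq_top_of_smul_eq_inv hp hp2 hζ (D := 2 * E - T) ?_
      (isCoprime_two_mul_sq_sub hp hp2 hs ((dvd_pow_self _ two_ne_zero).trans hT)) ?_ ?_
    · push_cast
      linear_combination -4 * hE
    · refine RingOfIntegers.ext ?_
      have hζ0 : (ζ : H) ≠ 0 := RingOfIntegers.coe_ne_zero_iff.mpr (hζ.ne_zero hp.ne_zero)
      simp [hsmul, hgζ, hζ0]
    · exact RingOfIntegers.ext (by simpa [hsmul, map_ofNat (algebraMap (𝓞 H) H) 2] using hgD)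

theorem prime_dvd_classNumber_of_pow_eq_neg_mul_sq {F H : Type} [Field F] [NumberField F] [Field H]
    [NumberField H] [Algebra F H] [IsGalois F H] {ζ θ E : 𝓞 H} (hp : p.Prime) (hp2 : p ≠ 2)
    (hζ : IsPrimitiveRoot ζ p) (hs : s ^ 2 = 1) (hT : (p : ℤ) ^ 2 ∣ T) (hE : E * (T - E) = s)
    (hθ : θ ^ p = -s * E ^ 2)
    (hw : ((ζ : H) - (ζ : H)⁻¹) * (2 * E - T) ∈ (algebraMap F H).range)
    (hgen : F⟮(ζ : H), (θ : H)⟯ = ⊤) (hdeg : p ∣ finrank F H)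
    (htors : ∀ x : 𝓞 F, x ^ p = 1 → x = 1) : p ∣ classNumber F := by
  have : Fact p.Prime := ⟨hp⟩
  have hact (g : Gal(H/F)) := exists_units_apply_eq_zpow_and_pow hp hp2
    (hζ.map_of_injective RingOfIntegers.coe_injective) hs ((dvd_pow_self _ two_ne_zero).trans hT)
    (by simpa using congrArg (algebraMap (𝓞 H) H) hE)
    (by simpa using congrArg (algebraMap (𝓞 H) H) hθ) hw g
  have : IsMulCommutative Gal(H/F) := isMulCommutative_of_apply_eq_zpow hgen fun g => by
    obtain ⟨ε, hgζ, -, k, -, hgθ⟩ := hact g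
    exact ⟨ε, hgζ, k, hgθ⟩
  obtain ⟨C, hC⟩ := exists_subgroup_index_eq_of_prime_dvd_card
    ((IsGalois.card_aut_eq_finrank F H).symm ▸ hdeg)
  subst hC
  refine index_dvd_classNumber C (hp.odd_of_ne_two hp2) htors fun g hg => ?_
  obtain ⟨ε, hgζ, hgD, k, hk, hgθ⟩ := hact g
  exact span_smul_sub_eq_top_of_ne_one hp hp2 hζ hs hT hE hθ hgen hg hgζ hgD hk hgθ

end Reflection

lemma sub_one_dvd_smul_sub_of_adjoin_eq_top {R G : Type*} [CommRing R] [IsDomain R] [Monoid G]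
    [MulSemiringAction G R] {n : ℕ} [NeZero n] {ζ : R} (hζ : IsPrimitiveRoot ζ n)
    (hadj : Algebra.adjoin ℤ {ζ} = ⊤) (g : G) (x : R) : ζ - 1 ∣ g • x - x := by
  have hx : x ∈ Algebra.adjoin ℤ {ζ} := hadj ▸ Algebra.mem_top
  induction hx using Algebra.adjoin_induction with
  | mem x hx =>
    obtain rfl := hx
    obtain ⟨i, -, hi⟩ := hζ.eq_pow_of_pow_eq_one (ξ := g • x)
      (by rw [← smul_pow', hζ.pow_eq_one, smul_one])
    rw [← hi, ← sub_sub_sub_cancel_right _ x 1]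
    exact dvd_sub (by simpa using sub_dvd_pow_sub_pow x 1 i) dvd_rfl
  | algebraMap c =>
    rw [smul_algebraMap, sub_self]
    exact dvd_zero _
  | add x y _ _ hx hy =>
    rw [smul_add, add_sub_add_comm]
    exact dvd_add hx hy
  | mul x y _ _ hx hy =>
    rw [smul_mul', show g • x * g • y - x * y = g • x * (g • y - y) + (g • x - x) * y by ring]
    exact dvd_add (hy.mul_left _) (hx.mul_right _)

lemma sq_ne_intCast_of_isCyclotomicExtension {K : Type*} [Field K] [NumberField K] {p : ℕ}
    [hp : Fact p.Prime] [IsCyclotomicExtension {p} ℚ K] (hp2 : p ≠ 2) {M : ℤ}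
    (hpM : ¬ (p : ℤ) ∣ M) (hM : ¬ IsSquare M) (d : K) : d ^ 2 ≠ M := by
  intro hd
  have : IsGalois ℚ K := IsCyclotomicExtension.isGalois {p} ℚ K
  have hζ := IsCyclotomicExtension.zeta_spec p ℤ (𝓞 K)
  set ζ := IsCyclotomicExtension.zeta p ℤ (𝓞 K)
  have hζ_prime : Prime (ζ - 1) :=
    (hζ.map_of_injective RingOfIntegers.coe_injective).zeta_sub_one_prime'
  obtain ⟨d, rfl⟩ : ∃ d' : 𝓞 K, (d' : K) = d :=
    ⟨⟨d, .of_pow two_pos (hd ▸ isIntegral_algebraMap)⟩, rfl⟩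
  have hdO : d ^ 2 = (M : 𝓞 K) := RingOfIntegers.ext (by simpa using hd)
  have hcop : IsCoprime (p : ℤ) (4 * M) := by
    have hp4 : IsCoprime (p : ℤ) (2 ^ 2) := Nat.isCoprime_iff_coprime.mpr
      (((Nat.coprime_primes hp.out Nat.prime_two).mpr hp2).pow_right 2)
    exact hp4.mul_right ((Nat.prime_iff_prime_int.mp hp.out).coprime_iff_not_dvd.mpr hpM)
  have hfixed (g : Gal(K/ℚ)) : g d = d := by
    have hgd : g • d = d ∨ g • d = -d := by
      rw [← sq_eq_sq_iff_eq_or_eq_neg, ← smul_pow', hdO, ← eq_intCast (algebraMap ℤ (𝓞 K)),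
        smul_algebraMap]
    refine congrArg ((↑) : 𝓞 K → K) (hgd.resolve_right fun hneg => hζ_prime.not_isUnit ?_)
    have hdvd := sub_one_dvd_smul_sub_of_adjoin_eq_top hζ
      (IsCyclotomicExtension.adjoin_primitive_root_eq_top hζ) g d
    rw [hneg] at hdvd
    refine (hcop.map (Int.castRingHom (𝓞 K))).isUnit_of_dvd' (x := ζ - 1) ?_ ?_
    · simpa using sub_one_pow_dvd_natCast hζ hp.out.one_lt
    · convert hdvd.mul_right (-2 * d) using 1
      push_cast [eq_intCast]
      linear_combination -4 * hdO
  obtain ⟨q, hq⟩ := IntermediateField.mem_bot.mp ((IsGalois.mem_bot_iff_fixed _).mpr hfixed)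
  refine hM (Rat.isSquare_intCast_iff.mp ⟨q, (algebraMap ℚ K).injective ?_⟩)
  rw [map_mul, hq, ← sq, hd, map_intCast]

lemma notMem_adjoin_of_sq_eq_intCast {L : Type*} [Field L] [CharZero L] {p : ℕ} (hp : p.Prime)
    (hp2 : p ≠ 2) {ζ d : L} (hζ : IsPrimitiveRoot ζ p) {M : ℤ} (hpM : ¬ (p : ℤ) ∣ M)
    (hM : ¬ IsSquare M) (hd : d ^ 2 = M) : d ∉ ℚ⟮ζ⟯ := by
  intro hmem
  have : Fact p.Prime := ⟨hp⟩
  have : NeZero p := ⟨hp.ne_zero⟩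
  have : IsCyclotomicExtension {p} ℚ ℚ⟮ζ⟯ := by
    change IsCyclotomicExtension {p} ℚ ℚ⟮ζ⟯.toSubalgebra
    rw [adjoin_simple_toSubalgebra_of_isAlgebraic
      ((hζ.isIntegral hp.pos).tower_top (A := ℚ)).isAlgebraic]
    exact hζ.adjoin_isCyclotomicExtension ℚ
  have : NumberField ℚ⟮ζ⟯ := IsCyclotomicExtension.numberField {p} ℚ ℚ⟮ζ⟯
  refine sq_ne_intCast_of_isCyclotomicExtension hp2 hpM hM (⟨d, hmem⟩ : ℚ⟮ζ⟯) ?_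
  exact Subtype.ext (by simpa using hd)

lemma minpoly_eq_X_sq_sub_C {K L : Type*} [Field K] [Field L] [Algebra K L] {d : L} {a : K}
    (hd : d ^ 2 = algebraMap K L a) (hdK : d ∉ (algebraMap K L).range) :
    minpoly K d = X ^ 2 - C a := by
  refine (minpoly.eq_of_irreducible_of_monic ?_ (by simp [hd])
    (monic_X_pow_sub_C a two_ne_zero)).symm
  refine X_pow_sub_C_irreducible_of_prime Nat.prime_two fun b hb => hdK ?_
  rw [← hb, map_pow, sq_eq_sq_iff_eq_or_eq_neg] at hd
  rcases hd with rfl | rfl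
  exacts [⟨b, rfl⟩, ⟨-b, map_neg _ _⟩]

lemma exists_algHom_adjoin_gen_eq_neg {K L : Type*} [Field K] [Field L] [Algebra K L] {d : L}
    {a : K} (hd : d ^ 2 = algebraMap K L a) (hdK : d ∉ (algebraMap K L).range) :
    ∃ ρ : K⟮d⟯ →ₐ[K] L, ρ (AdjoinSimple.gen K d) = -d := by
  have hmin := minpoly_eq_X_sq_sub_C hd hdK
  have hint : IsIntegral K d := .of_pow two_pos (hd ▸ isIntegral_algebraMap)
  have hroot : -d ∈ (minpoly K d).aroots L := by
    rw [mem_aroots, hmin]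
    exact ⟨(monic_X_pow_sub_C a two_ne_zero).ne_zero, by simp [hd]⟩
  exact ⟨(algHomAdjoinIntegralEquiv K hint).symm ⟨-d, hroot⟩,
    algHomAdjoinIntegralEquiv_symm_apply_gen K hint _⟩

lemma exists_apply_eq_of_mem_adjoin {E L : Type*} [Field E] [Field L] [CharZero L]
    {σ τ : E →+* L} {w : E} (hw : σ w = τ w) {x : L} (hx : x ∈ ℚ⟮τ w⟯) :
    ∃ y, τ y = x ∧ σ y = x := by
  induction hx using adjoin_induction with
  | mem x hx => exact ⟨w, hx.symm, hw.trans hx.symm⟩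
  | algebraMap q => exact ⟨q, by simp, by simp⟩
  | add x y _ _ hx hy =>
    obtain ⟨⟨x, rfl, hx⟩, y, rfl, hy⟩ := And.intro hx hy
    exact ⟨x + y, map_add _ _ _, by rw [map_add, hx, hy]⟩
  | inv x _ hx =>
    obtain ⟨x, rfl, hx⟩ := hx
    exact ⟨x⁻¹, map_inv₀ _ _, by rw [map_inv₀, hx]⟩
  | mul x y _ _ hx hy =>
    obtain ⟨⟨x, rfl, hx⟩, y, rfl, hy⟩ := And.intro hx hy
    exact ⟨x * y, map_mul _ _ _, by rw [map_mul, hx, hy]⟩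

-- The embedding `σ` of `ℚ(ζ, d)` with `σ ζ = ζ⁻¹` and `σ d = -d` fixes `(ζ - ζ⁻¹) * d`.
lemma eq_one_of_pow_eq_one_of_mem_adjoin {n : ℕ} (hn : Odd n) {ζ : ℂ} (hζ : IsPrimitiveRoot ζ n)
    {d : ℝ} {a : ℚ} (hd : d ^ 2 = a) (hdζ : (d : ℂ) ∉ ℚ⟮ζ⟯) {x : ℂ}
    (hx : x ∈ ℚ⟮(ζ - ζ⁻¹) * d⟯) (hxn : x ^ n = 1) : x = 1 := by
  have : NeZero n := ⟨hn.pos.ne'⟩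
  have hconj {z : ℂ} (hz : z ^ n = 1) : (starRingEnd ℂ) z = z⁻¹ :=
    (Complex.inv_eq_conj (Complex.norm_eq_one_of_pow_eq_one hz hn.pos.ne')).symm
  have hdC : (d : ℂ) ^ 2 = algebraMap ℚ⟮ζ⟯ ℂ (a : ℚ⟮ζ⟯) := by
    rw [map_ratCast]
    exact_mod_cast congrArg Complex.ofReal hd
  obtain ⟨ρ, hρ⟩ := exists_algHom_adjoin_gen_eq_neg hdC (by simpa using hdζ)
  let ζ' : ℚ⟮ζ⟯⟮(d : ℂ)⟯ := algebraMap ℚ⟮ζ⟯ _ (AdjoinSimple.gen ℚ ζ)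
  have hρζ' : ρ ζ' = ζ := ρ.commutes _
  let σ : ℚ⟮ζ⟯⟮(d : ℂ)⟯ →+* ℂ := (starRingEnd ℂ).comp ρ
  have hσ : σ ((ζ' - ζ'⁻¹) * AdjoinSimple.gen _ (d : ℂ)) = (ζ - ζ⁻¹) * d := by
    rw [map_mul, map_sub, map_inv₀]
    simp only [σ, RingHom.comp_apply, RingHom.coe_coe, hρ, hρζ', hconj hζ.pow_eq_one, inv_inv,
      map_neg, Complex.conj_ofReal]
    ring
  obtain ⟨y, hyx, hσy⟩ := exists_apply_eq_of_mem_adjoin (τ := algebraMap _ ℂ) hσ hx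
  obtain ⟨i, -, hi⟩ := hζ.eq_pow_of_pow_eq_one hxn
  have hρy : ρ y = x := by
    rw [show y = ζ' ^ i from Subtype.ext (hyx.trans hi.symm), map_pow, hρζ', hi]
  have hinv : x⁻¹ = x := by
    rw [← hconj hxn, ← hρy]
    exact hσy.trans hρy.symm
  exact eq_of_sub_inv_eq_sub_inv hn hxn (one_pow n) (by rw [hinv, sub_self, inv_one, sub_self])

lemma exists_intCast_eq_of_squarefree_mul_sq {M k : ℤ} (hM : Squarefree M) {q : ℚ}
    (h : M * q ^ 2 = k) : ∃ v : ℤ, (v : ℚ) = q := by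
  have hMq : (M * q) ^ 2 = ((M * k : ℤ) : ℚ) := by
    push_cast
    linear_combination (M : ℚ) * h
  obtain ⟨m, hm : (m : ℚ) = M * q⟩ := IsIntegrallyClosed.isIntegral_iff.mp
    (IsIntegral.of_pow (R := ℤ) (x := M * q) two_pos
      (by rw [hMq]; exact isIntegral_algebraMap (x := M * k)))
  have hMm : M ∣ m := by
    rw [← hM.dvd_pow_iff_dvd two_ne_zero]
    rw [← hm] at hMq
    exact ⟨k, by exact_mod_cast hMq⟩
  obtain ⟨v, rfl⟩ := hMm
  push_cast at hm
  exact ⟨v, mul_left_cancel₀ (by exact_mod_cast hM.ne_zero) hm⟩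

lemma isIntegral_of_mul_intCast_sub_eq {R : Type*} [CommRing R] {s T : ℤ} {E : R}
    (hE : E * (T - E) = s) : IsIntegral ℤ E := by
  refine ⟨X ^ 2 - C T * X + C s, by monicity!, ?_⟩
  rw [eval₂_add, eval₂_sub, eval₂_mul, eval₂_pow, eval₂_X, eval₂_C, eval₂_C, eq_intCast,
    eq_intCast]
  linear_combination -hE

lemma exists_eq_add_mul_of_mem_adjoin_simple {K L : Type*} [Field K] [Field L] [Algebra K L]
    {d x : L} {c : K} (hd : d ^ 2 = algebraMap K L c) (hx : x ∈ K⟮d⟯) :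
    ∃ a b : K, x = algebraMap K L a + algebraMap K L b * d := by
  have hmonic : (X ^ 2 - C c).Monic := monic_X_pow_sub_C c two_ne_zero
  have hroot : aeval d (X ^ 2 - C c) = 0 := by simp [hd]
  rw [← mem_toSubalgebra, adjoin_simple_toSubalgebra_of_isAlgebraic ⟨_, hmonic.ne_zero, hroot⟩,
    Algebra.adjoin_singleton_eq_range_aeval] at hx
  obtain ⟨f, rfl⟩ := hx
  have hdeg : (f %ₘ (X ^ 2 - C c)).natDegree ≤ 1 := by
    have := natDegree_modByMonic_lt f hmonic
      fun h => by simpa using congrArg natDegree h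
    rw [natDegree_X_pow_sub_C] at this
    omega
  obtain ⟨b, a, hab⟩ := exists_eq_X_add_C_of_natDegree_le_one hdeg
  refine ⟨a, b, ?_⟩
  change aeval d f = _
  rw [← aeval_modByMonic_eq_self_of_root hroot, hab]
  simp [add_comm]

section Units

variable {L : Type*} [Field L] [CharZero L] {p : ℕ} {s T M r : ℤ} {d κ : L}

lemma exists_int_eq_of_pow_eq (hp : Odd p) (hM : Squarefree M) (hs : s = -1 ∨ s = 1)
    (heq : T ^ 2 - 4 * s = M * r ^ 2) (hd : d ^ 2 = M) (hdQ : d ∉ (algebraMap ℚ L).range)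
    (hκ : κ ∈ ℚ⟮d⟯) (hpow : κ ^ p = (T + r * d) / 2) :
    ∃ u v : ℤ, u ^ 2 - M * v ^ 2 = 4 * s ∧ κ = (u + v * d) / 2 := by
  have hd' : d ^ 2 = algebraMap ℚ L M := by rw [hd, map_intCast]
  have heqL : (T : L) ^ 2 - 4 * s = M * r ^ 2 := by exact_mod_cast heq
  obtain ⟨a, b, hab⟩ := exists_eq_add_mul_of_mem_adjoin_simple hd' hκ
  obtain ⟨ρ, hρ⟩ := exists_algHom_adjoin_gen_eq_neg hd' hdQ
  have hconj : (algebraMap ℚ L a - algebraMap ℚ L b * d) ^ p = (T - r * d) / 2 := by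
    have hpow' : (algebraMap ℚ _ a + algebraMap ℚ _ b * AdjoinSimple.gen ℚ d) ^ p =
        (T + r * AdjoinSimple.gen ℚ d) / 2 := by
      apply (algebraMap ℚ⟮d⟯ L).injective
      rw [map_div₀, map_ofNat]
      simpa [hab] using hpow
    have hρpow := congrArg ρ hpow'
    rw [map_div₀, map_ofNat] at hρpow
    simpa [hρ, ← sub_eq_add_neg] using hρpow
  have hnorm : a ^ 2 - M * b ^ 2 = s := by
    refine hp.strictMono_pow.injective (.trans ?_ (?_ : (s : ℚ) = s ^ p))
    · apply (algebraMap ℚ L).injective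
      simp only [map_pow, map_sub, map_mul, map_intCast]
      rw [← hd, mul_comm (d ^ 2), ← mul_pow, sq_sub_sq, mul_pow, ← hab, hpow, hconj]
      linear_combination heqL / 4 - r ^ 2 * hd / 4
    · rcases hs with rfl | rfl <;> simp [hp.neg_one_pow]
  have htrace : ∃ u : ℤ, (u : ℚ) = 2 * a := by
    have hint₁ : IsIntegral ℤ κ := .of_pow hp.pos <| isIntegral_of_mul_intCast_sub_eq (s := s)
      (T := T) (by rw [hpow]; linear_combination heqL / 4 - r ^ 2 * hd / 4)
    have hint₂ : IsIntegral ℤ (algebraMap ℚ L a - algebraMap ℚ L b * d) :=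
      .of_pow hp.pos <| isIntegral_of_mul_intCast_sub_eq (s := s) (T := T)
        (by rw [hconj]; linear_combination heqL / 4 - r ^ 2 * hd / 4)
    refine IsIntegrallyClosed.isIntegral_iff.mp
      ((isIntegral_algebraMap_iff (algebraMap ℚ L).injective).mp ?_)
    rw [show algebraMap ℚ L (2 * a) = κ + (algebraMap ℚ L a - algebraMap ℚ L b * d) by
      rw [hab, map_mul, map_ofNat]; ring]
    exact hint₁.add hint₂
  obtain ⟨u, hu⟩ := htrace
  obtain ⟨v, hv⟩ := exists_intCast_eq_of_squarefree_mul_sq hM (q := 2 * b) (k := u ^ 2 - 4 * s)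
    (by push_cast; rw [hu]; linear_combination -4 * hnorm)
  refine ⟨u, v, ?_, ?_⟩
  · have : (u : ℚ) ^ 2 - M * v ^ 2 = 4 * s := by rw [hu, hv]; linear_combination 4 * hnorm
    exact_mod_cast this
  · have hu' : (u : L) = 2 * algebraMap ℚ L a := by simpa using congrArg (algebraMap ℚ L) hu
    have hv' : (v : L) = 2 * algebraMap ℚ L b := by simpa using congrArg (algebraMap ℚ L) hv
    rw [hab, hu', hv']
    ring

lemma exists_pow_eq_of_pow_eq_mul_sq {K : Type*} [Field K] {p : ℕ} (hp : Odd p) {ε E κ : K}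
    (hε : ε ^ 2 = 1) (h : κ ^ p = ε * E ^ 2) : ∃ c, c ^ p = E := by
  have hεp : ε ^ p = ε := by
    obtain ⟨k, rfl⟩ := hp
    rw [pow_succ, pow_mul, hε, one_pow, one_mul]
  have hpow : E ^ 2 = (ε * κ) ^ p := by
    rw [mul_pow, hεp, h, ← mul_assoc, ← sq, hε, one_mul]
  obtain ⟨c, hE, -⟩ := (pow_eq_pow_iff_of_coprime hp.coprime_two_left).mp hpow
  exact ⟨c, hE.symm⟩

lemma prime_dvd_finrank_of_pow_eq {K L : Type*} [Field K] [Field L] [Algebra K L] {p : ℕ}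
    (hp : p.Prime) {A : K} (hA : ∀ κ : K, κ ^ p ≠ A) {θ : L} (hθ : θ ^ p = algebraMap K L A) :
    p ∣ finrank K L := by
  have hmonic := monic_X_pow_sub_C A hp.ne_zero
  have hroot : aeval θ (X ^ p - C A) = 0 := by simp [hθ]
  have hmin := minpoly.eq_of_irreducible_of_monic
    (X_pow_sub_C_irreducible_of_prime hp hA) hroot hmonic
  rw [← natDegree_X_pow_sub_C (n := p) (r := A), hmin]
  exact minpoly.degree_dvd ⟨_, hmonic, hroot⟩

lemma prime_dvd_finrank_of_pow_eq_neg_mul_sq (hp : p.Prime) (hp2 : p ≠ 2) (hM : Squarefree M)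
    (hs : s = -1 ∨ s = 1) (heq : T ^ 2 - 4 * s = M * r ^ 2) (hd : d ^ 2 = M)
    (hdQ : d ∉ (algebraMap ℚ L).range)
    (hnotpow : ¬∃ u v : ℤ, u ^ 2 - M * v ^ 2 = 4 * s ∧ ((u + v * d) / 2) ^ p = (T + r * d) / 2)
    {θ : L} (hθ : θ ^ p = -s * ((T + r * d) / 2) ^ 2) : p ∣ finrank ℚ L := by
  let E : ℚ⟮d⟯ := (T + r * AdjoinSimple.gen ℚ d) / 2
  have hE : algebraMap ℚ⟮d⟯ L E = (T + r * d) / 2 := by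
    rw [map_div₀, map_ofNat]
    simp
  have hs2 : (-s : ℚ⟮d⟯) ^ 2 = 1 := by rcases hs with rfl | rfl <;> simp
  have hA (κ : ℚ⟮d⟯) : κ ^ p ≠ -s * E ^ 2 := by
    intro hκ
    obtain ⟨c, hc⟩ := exists_pow_eq_of_pow_eq_mul_sq (hp.odd_of_ne_two hp2) hs2 hκ
    have hcL : (c : L) ^ p = (T + r * d) / 2 := by
      rw [← hE, ← hc, map_pow]
      rfl
    obtain ⟨u, v, huv, hcuv⟩ :=
      exists_int_eq_of_pow_eq (hp.odd_of_ne_two hp2) hM hs heq hd hdQ c.2 hcL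
    exact hnotpow ⟨u, v, huv, hcuv ▸ hcL⟩
  have hθE : θ ^ p = algebraMap ℚ⟮d⟯ L (-s * E ^ 2) := by
    rw [hθ, map_mul, map_pow, hE, map_neg, map_intCast]
  exact (prime_dvd_finrank_of_pow_eq hp hA hθE).trans
    (Dvd.intro_left _ (finrank_mul_finrank ℚ ℚ⟮d⟯ L))

end Units

lemma finrank_adjoin_simple_eq_two {K L : Type*} [Field K] [Field L] [Algebra K L] {d : L} {a : K}
    (hd : d ^ 2 = algebraMap K L a) (hdK : d ∉ (algebraMap K L).range) : finrank K K⟮d⟯ = 2 := by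
  have hmin := minpoly_eq_X_sq_sub_C hd hdK
  rw [adjoin.finrank (.of_pow two_pos (hd ▸ isIntegral_algebraMap)), hmin, natDegree_X_pow_sub_C]

lemma not_dvd_finrank_adjoin_sub_inv_mul {L : Type*} [Field L] [CharZero L] {p : ℕ}
    (hp : p.Prime) (hp2 : p ≠ 2) {ζ d : L} (hζ : IsPrimitiveRoot ζ p) {a : ℚ}
    (hd : d ^ 2 = a) (hdζ : d ∉ ℚ⟮ζ⟯) : ¬ p ∣ finrank ℚ ℚ⟮(ζ - ζ⁻¹) * d⟯ := by
  have hle : ℚ⟮(ζ - ζ⁻¹) * d⟯ ≤ ℚ⟮ζ⟯⟮d⟯.restrictScalars ℚ := by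
    rw [adjoin_simple_le_iff, mem_restrictScalars]
    have hζmem : ζ ∈ ℚ⟮ζ⟯⟮d⟯ := ℚ⟮ζ⟯⟮d⟯.algebraMap_mem (AdjoinSimple.gen ℚ ζ)
    exact mul_mem (sub_mem hζmem (inv_mem hζmem)) (mem_adjoin_simple_self _ d)
  have hcyc : finrank ℚ ℚ⟮ζ⟯ = p - 1 := by
    rw [adjoin.finrank (hζ.isIntegral hp.pos).tower_top, ← cyclotomic_eq_minpoly_rat hζ hp.pos,
      natDegree_cyclotomic, Nat.totient_prime hp]
  have hquad : finrank ℚ⟮ζ⟯ ℚ⟮ζ⟯⟮d⟯ = 2 :=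
    finrank_adjoin_simple_eq_two (a := (a : ℚ⟮ζ⟯)) (by simpa using hd) (by simpa using hdζ)
  have hdeg : finrank ℚ (ℚ⟮ζ⟯⟮d⟯.restrictScalars ℚ) = (p - 1) * 2 := by
    rw [← hcyc, ← hquad]
    exact (finrank_mul_finrank ℚ ℚ⟮ζ⟯ ℚ⟮ζ⟯⟮d⟯).symm
  intro hdvd
  have := hdvd.trans (finrank_dvd_of_le_right hle)
  rw [hdeg, hp.dvd_mul] at this
  rcases this with hdvd | hdvd
  · exact Nat.not_dvd_of_pos_of_lt (by have := hp.two_le; omega) (by have := hp.pos; omega) hdvd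
  · exact hp2 ((Nat.prime_dvd_prime_iff_eq hp Nat.prime_two).mp hdvd)

lemma mem_of_pow_eq_pow {F L : Type*} [Field F] [Field L] [Algebra F L] {n : ℕ} [NeZero n]
    {ζ x y : L} (hζ : IsPrimitiveRoot ζ n) {N : IntermediateField F L} (hζN : ζ ∈ N)
    (hy : y ∈ N) (hxy : x ^ n = y ^ n) : x ∈ N := by
  rcases eq_or_ne y 0 with rfl | hy0
  · rw [zero_pow (NeZero.ne n)] at hxy
    rw [eq_zero_of_pow_eq_zero hxy]
    exact zero_mem N
  · obtain ⟨i, -, hi⟩ := hζ.eq_pow_of_pow_eq_one (ξ := x / y)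
      (by rw [div_pow, hxy, div_self (pow_ne_zero n hy0)])
    rw [← div_mul_cancel₀ x hy0, ← hi]
    exact mul_mem (pow_mem hζN i) hy

section SplittingField

variable {F L : Type*} [Field F] [Field L] [Algebra F L] {n : ℕ} [NeZero n] {ζ θ : L} {c : F}

lemma adjoin_pair_eq_adjoin_rootSet (hζ : IsPrimitiveRoot ζ n) (hθ : θ ≠ 0)
    (hc : θ ^ n + (θ ^ n)⁻¹ = algebraMap F L c) :
    F⟮ζ, θ⟯ = adjoin F
      (((X ^ n - 1) * ((X ^ n) ^ 2 - C c * X ^ n + 1) : F[X]).rootSet L) := by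
  set f : F[X] := (X ^ n - 1) * ((X ^ n) ^ 2 - C c * X ^ n + 1)
  have hf : f ≠ 0 := by
    intro h
    simpa [f, NeZero.ne n] using congrArg (eval 0) h
  have hfx (x : L) : aeval x f = (x ^ n - 1) * ((x ^ n - θ ^ n) * (x ^ n - (θ ^ n)⁻¹)) := by
    simp only [f, map_mul, map_sub, map_add, map_pow, aeval_X, aeval_C, map_one, ← hc]
    linear_combination -(x ^ n - 1) * mul_inv_cancel₀ (pow_ne_zero n hθ)
  have hζmem : ζ ∈ F⟮ζ, θ⟯ := subset_adjoin _ _ (by simp)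
  have hθmem : θ ∈ F⟮ζ, θ⟯ := subset_adjoin _ _ (by simp)
  refine le_antisymm (adjoin_le_iff.mpr ?_) (adjoin_le_iff.mpr fun x hx => ?_)
  · rintro x (rfl | rfl) <;> refine subset_adjoin _ _ ((mem_rootSet_of_ne hf).mpr ?_)
    · rw [hfx, hζ.pow_eq_one, sub_self, zero_mul]
    · rw [hfx, sub_self, zero_mul, mul_zero]
  · rw [mem_rootSet_of_ne hf, hfx, mul_eq_zero, mul_eq_zero, sub_eq_zero, sub_eq_zero,
      sub_eq_zero] at hx
    rcases hx with hx | hx | hx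
    · exact mem_of_pow_eq_pow hζ hζmem (one_mem _) (by rw [hx, one_pow])
    · exact mem_of_pow_eq_pow hζ hζmem hθmem hx
    · exact mem_of_pow_eq_pow hζ hζmem (inv_mem hθmem) (by rw [hx, inv_pow])

lemma finiteDimensional_and_isGalois_adjoin_pair [CharZero F] [IsAlgClosed L]
    (hζ : IsPrimitiveRoot ζ n) (hθ : θ ≠ 0) (hc : θ ^ n + (θ ^ n)⁻¹ = algebraMap F L c) :
    FiniteDimensional F F⟮ζ, θ⟯ ∧ IsGalois F F⟮ζ, θ⟯ := by
  let f : F[X] := (X ^ n - 1) * ((X ^ n) ^ 2 - C c * X ^ n + 1)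
  have : f.IsSplittingField F F⟮ζ, θ⟯ := by
    rw [adjoin_pair_eq_adjoin_rootSet hζ hθ hc]
    exact adjoin_rootSet_isSplittingField (IsAlgClosed.splits _)
  have : Normal F F⟮ζ, θ⟯ := .of_isSplittingField f
  exact ⟨IsSplittingField.finiteDimensional _ f, {}⟩

end SplittingField

lemma neg_mul_sq_add_inv_eq {K : Type*} [Field K] {s T E : K} (hs : s ^ 2 = 1)
    (hE : E * (T - E) = s) : -s * E ^ 2 + (-s * E ^ 2)⁻¹ = 2 - s * T ^ 2 := by
  rw [inv_eq_of_mul_eq_one_right (neg_mul_sq_mul_neg_mul_sq_eq_one hs hE)]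
  linear_combination 2 * s * hE + 2 * hs

lemma adjoin_gens_eq_top {F L : Type*} [Field F] [Field L] [Algebra F L] {x y : L}
    (hx : x ∈ F⟮x, y⟯) (hy : y ∈ F⟮x, y⟯) :
    F⟮(⟨x, hx⟩ : F⟮x, y⟯), (⟨y, hy⟩ : F⟮x, y⟯)⟯ = ⊤ :=
  lift_injective _ (by rw [lift_adjoin, lift_top, Set.image_pair])

lemma mem_of_sub_inv_mul_mem_range {F L : Type*} [Field F] [Field L] [CharZero L] [Algebra F L]
    {n : ℕ} (hn : Odd n) (hn1 : 1 < n) {ζ x : L} (hζ : IsPrimitiveRoot ζ n)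
    (hx : (ζ - ζ⁻¹) * x ∈ (algebraMap F L).range) {N : IntermediateField F L} (hζN : ζ ∈ N) :
    x ∈ N := by
  have hζ1 : ζ - ζ⁻¹ ≠ 0 := fun h => hζ.ne_one hn1 <|
    eq_of_sub_inv_eq_sub_inv hn hζ.pow_eq_one (one_pow n) (by simpa using h)
  obtain ⟨w, hw⟩ := hx
  rw [← mul_div_cancel_left₀ x hζ1, ← hw]
  exact div_mem (N.algebraMap_mem w) (sub_mem hζN (inv_mem hζN))

lemma prime_dvd_classNumber_of_isGalois {F H : Type} [Field F] [NumberField F] [Field H]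
    [NumberField H] [Algebra F H] [IsGalois F H] {ζ θ E : H} {p : ℕ} {s T : ℤ} (hp : p.Prime)
    (hp2 : p ≠ 2) (hζ : IsPrimitiveRoot ζ p) (hs : s ^ 2 = 1) (hT : (p : ℤ) ^ 2 ∣ T)
    (hE : E * (T - E) = s) (hθ : θ ^ p = -s * E ^ 2)
    (hw : (ζ - ζ⁻¹) * (2 * E - T) ∈ (algebraMap F H).range) (hgen : F⟮ζ, θ⟯ = ⊤)
    (hdeg : p ∣ finrank F H) (htors : ∀ x : 𝓞 F, x ^ p = 1 → x = 1) : p ∣ classNumber F := by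
  have hEint := isIntegral_of_mul_intCast_sub_eq hE
  have hθint : IsIntegral ℤ θ := .of_pow hp.pos <| by
    rw [hθ]
    exact (isIntegral_algebraMap (x := s)).neg.mul (hEint.pow 2)
  obtain ⟨ζ, rfl⟩ : ∃ x : 𝓞 H, (x : H) = ζ := ⟨⟨ζ, hζ.isIntegral hp.pos⟩, rfl⟩
  obtain ⟨θ, rfl⟩ : ∃ x : 𝓞 H, (x : H) = θ := ⟨⟨θ, hθint⟩, rfl⟩
  obtain ⟨E, rfl⟩ : ∃ x : 𝓞 H, (x : H) = E := ⟨⟨E, hEint⟩, rfl⟩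
  exact prime_dvd_classNumber_of_pow_eq_neg_mul_sq hp hp2
    (hζ.of_map_of_injective RingOfIntegers.coe_injective) hs hT
    (RingOfIntegers.ext (by simpa using hE)) (RingOfIntegers.ext (by simpa using hθ)) hw hgen hdeg
    htors

lemma prime_dvd_classNumber_of_isAlgClosed {F L : Type} [Field F] [NumberField F] [Field L]
    [IsAlgClosed L] [Algebra F L] {ζ θ E : L} {p : ℕ} {s T : ℤ} (hp : p.Prime) (hp2 : p ≠ 2)
    (hζ : IsPrimitiveRoot ζ p) (hs : s ^ 2 = 1) (hT : (p : ℤ) ^ 2 ∣ T) (hE : E * (T - E) = s)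
    (hθ : θ ^ p = -s * E ^ 2) (hw : (ζ - ζ⁻¹) * (2 * E - T) ∈ (algebraMap F L).range)
    (hdeg : p ∣ finrank F F⟮ζ, θ⟯) (htors : ∀ x : 𝓞 F, x ^ p = 1 → x = 1) :
    p ∣ classNumber F := by
  have : NeZero p := ⟨hp.ne_zero⟩
  have : CharZero L := charZero_of_injective_algebraMap (algebraMap F L).injective
  have hsL : (s : L) ^ 2 = 1 := by exact_mod_cast hs
  have hc : θ ^ p + (θ ^ p)⁻¹ = algebraMap F L (2 - s * T ^ 2) := by
    rw [hθ, neg_mul_sq_add_inv_eq hsL hE]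
    simp [map_ofNat]
  have hθ0 : θ ≠ 0 := by
    rw [← pow_ne_zero_iff hp.ne_zero, hθ]
    exact left_ne_zero_of_mul_eq_one (neg_mul_sq_mul_neg_mul_sq_eq_one hsL hE)
  obtain ⟨_, _⟩ := finiteDimensional_and_isGalois_adjoin_pair hζ hθ0 hc
  have : NumberField F⟮ζ, θ⟯ := { to_finiteDimensional := Module.Finite.trans F _ }
  have hζH : ζ ∈ F⟮ζ, θ⟯ := subset_adjoin _ _ (by simp)
  have hθH : θ ∈ F⟮ζ, θ⟯ := subset_adjoin _ _ (by simp)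
  have hEH : E ∈ F⟮ζ, θ⟯ := by
    have hmem := mem_of_sub_inv_mul_mem_range (hp.odd_of_ne_two hp2) hp.one_lt hζ hw hζH
    rw [show E = (2 * E - T + T) / 2 by ring]
    exact div_mem (add_mem hmem (intCast_mem _ T)) (ofNat_mem _ 2)
  refine prime_dvd_classNumber_of_isGalois (H := F⟮ζ, θ⟯) (ζ := ⟨ζ, hζH⟩) (E := ⟨E, hEH⟩) hp hp2
    (IsPrimitiveRoot.coe_submonoidClass_iff.mp hζ) hs hT (Subtype.ext (by simpa using hE))
    (Subtype.ext (by simpa using hθ)) ?_ (adjoin_gens_eq_top hζH hθH) hdeg htors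
  obtain ⟨w, hw⟩ := hw
  exact ⟨w, Subtype.ext hw⟩

lemma not_dvd_of_sq_sub_eq_mul_sq {p : ℕ} (hp : p.Prime) (hp2 : p ≠ 2) {s T M r : ℤ}
    (hs : s ^ 2 = 1) (hT : (p : ℤ) ∣ T) (heq : T ^ 2 - 4 * s = M * r ^ 2) : ¬ (p : ℤ) ∣ M := by
  intro hpM
  have h4 : (p : ℤ) ∣ 2 ^ 2 := by
    rw [show (2 : ℤ) ^ 2 = s * (T * T - M * r ^ 2) by linear_combination -s * heq - 4 * hs]
    exact ((hT.mul_right T).sub (hpM.mul_right _)).mul_left s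
  exact hp2 ((Nat.prime_dvd_prime_iff_eq hp Nat.prime_two).mp
    (by exact_mod_cast (Nat.prime_iff_prime_int.mp hp).dvd_of_dvd_pow h4))

lemma prime_dvd_finrank_adjoin_pair {p : ℕ} (hp : p.Prime) (hp2 : p ≠ 2) {s T M r : ℤ}
    (hM : Squarefree M) (hs : s = -1 ∨ s = 1) (heq : T ^ 2 - 4 * s = M * r ^ 2) {d : ℝ}
    (hd : d ^ 2 = M) (hnotpow : ¬∃ u v : ℤ, u ^ 2 - M * v ^ 2 = 4 * s ∧
      ((u + v * d) / 2) ^ p = (T + r * d) / 2)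
    {ζ : ℂ} (hζ : IsPrimitiveRoot ζ p) (hdζ : (d : ℂ) ∉ ℚ⟮ζ⟯) {F : IntermediateField ℚ ℂ}
    (hF : F = ℚ⟮(ζ - ζ⁻¹) * d⟯) {θ : ℂ} (hθ : θ ^ p = -s * ((T + r * d) / 2) ^ 2) :
    p ∣ finrank F F⟮ζ, θ⟯ := by
  have hdH : (d : ℂ) ∈ F⟮ζ, θ⟯ := mem_of_sub_inv_mul_mem_range (hp.odd_of_ne_two hp2) hp.one_lt hζ
    ⟨⟨_, hF ▸ mem_adjoin_simple_self ℚ _⟩, rfl⟩ (subset_adjoin _ _ (by simp))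
  have hdC : (d : ℂ) ^ 2 = M := by exact_mod_cast congrArg Complex.ofReal hd
  have htwo : ((2 : F⟮ζ, θ⟯) : ℂ) = 2 := rfl
  have hdeg : p ∣ finrank ℚ F⟮ζ, θ⟯ := by
    refine prime_dvd_finrank_of_pow_eq_neg_mul_sq (d := (⟨d, hdH⟩ : F⟮ζ, θ⟯))
      (θ := ⟨θ, subset_adjoin _ _ (by simp)⟩) hp hp2 hM hs heq ?_ ?_ ?_ ?_
    · exact Subtype.ext (by simpa using hdC)
    · rintro ⟨q, hq⟩
      refine hdζ ?_
      rw [← show (q : ℂ) = d by simpa using congrArg Subtype.val hq]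
      exact SubfieldClass.ratCast_mem _ q
    · rintro ⟨u, v, huv, hpow⟩
      refine hnotpow ⟨u, v, huv, ?_⟩
      have hpowC : ((u + v * d) / 2 : ℂ) ^ p = (T + r * d) / 2 := by
        simpa [htwo] using congrArg Subtype.val hpow
      exact_mod_cast hpowC
    · exact Subtype.ext (by simpa [htwo] using hθ)
  rw [← finrank_mul_finrank ℚ F] at hdeg
  refine (hp.dvd_mul.mp hdeg).resolve_left ?_
  rw [hF]
  exact not_dvd_finrank_adjoin_sub_inv_mul hp hp2 hζ (a := M) (by simpa using hdC) hdζ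

theorem p_divides_class_number_of_mirror_field_general {p : ℕ} (hp : p.Prime) (hp2 : p ≠ 2)
    {s T M r : ℤ} (hs : s = -1 ∨ s = 1) (hT : (p : ℤ) ^ 2 ∣ T) (hM : 2 ≤ M) (hsqf : Squarefree M)
    (heq : T ^ 2 - 4 * s = M * r ^ 2)
    (hnotpow : ¬∃ u v : ℤ, u ^ 2 - M * v ^ 2 = 4 * s ∧
      ((u + v * √(M : ℝ)) / 2) ^ p = (T + r * √(M : ℝ)) / 2)
    {ζ : ℂ} (hζ : IsPrimitiveRoot ζ p) (F : IntermediateField ℚ ℂ) [NumberField F]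
    (hF : F = ℚ⟮(ζ - ζ⁻¹) * (√(M : ℝ) : ℝ)⟯) : p ∣ classNumber F := by
  have hs2 : s ^ 2 = 1 := by rcases hs with rfl | rfl <;> norm_num
  have hd : √(M : ℝ) ^ 2 = M := Real.sq_sqrt (by exact_mod_cast (by omega : 0 ≤ M))
  generalize √(M : ℝ) = d at hd hF hnotpow
  have hdC : (d : ℂ) ^ 2 = M := by exact_mod_cast congrArg Complex.ofReal hd
  have hsq : ¬ IsSquare M := by
    rintro ⟨k, rfl⟩
    rw [Int.isUnit_mul_self (hsqf k dvd_rfl)] at hM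
    omega
  have hpM := not_dvd_of_sq_sub_eq_mul_sq hp hp2 hs2 ((dvd_pow_self _ two_ne_zero).trans hT) heq
  have hdζ := notMem_adjoin_of_sq_eq_intCast hp hp2 hζ hpM hsq hdC
  have heqC : (T : ℂ) ^ 2 - 4 * s = M * r ^ 2 := by exact_mod_cast heq
  obtain ⟨θ, hθ⟩ := IsAlgClosed.exists_pow_nat_eq (-s * ((T + r * d) / 2 : ℂ) ^ 2) hp.pos
  have hw : (ζ - ζ⁻¹) * (2 * ((T + r * d) / 2) - T) ∈ F := by
    rw [show (ζ - ζ⁻¹) * (2 * ((T + r * d) / 2) - T) = r * ((ζ - ζ⁻¹) * d) by ring]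
    exact mul_mem (intCast_mem _ r) (hF ▸ mem_adjoin_simple_self ℚ _)
  refine prime_dvd_classNumber_of_isAlgClosed hp hp2 hζ hs2 hT
    (by linear_combination heqC / 4 - r ^ 2 * hdC / 4) hθ ⟨⟨_, hw⟩, rfl⟩
    (prime_dvd_finrank_adjoin_pair hp hp2 hsqf hs heq hd hnotpow hζ hdζ hF hθ) fun x hx => ?_
  have hxC : ((x : F) : ℂ) ^ p = 1 := congrArg (fun y : 𝓞 F => ((y : F) : ℂ)) hx
  exact RingOfIntegers.ext (Subtype.ext (eq_one_of_pow_eq_one_of_mem_adjoin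
    (hp.odd_of_ne_two hp2) hζ (a := M) (by simpa using hd) hdζ (hF ▸ (x : F).2) hxC))

/-- let `p ≥ 5` be prime, `s = ±1`, `t ≥ 1`, `p⁴t² − 4s = M·r²`
with `M ≥ 2` squarefree and `r ≥ 1`, and let `E = (p²t + r√M)/2`, a unit of norm
`s` of `O_{ℚ(√M)}`.  If `E` is not a `p`th power in the unit group of
`O_{ℚ(√M)}`, then `p` divides the class number of the imaginary cyclic field
`F = ℚ((ζ_p − ζ_p⁻¹)·√M)` of degree `p − 1`, where `ζ_p = exp(2πi/p)`. -/
theorem p_divides_class_number_of_mirror_field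
    (p : ℕ) (hp : p.Prime) (hp5 : 5 ≤ p)
    (s t : ℤ) (hs : s = -1 ∨ s = 1) (ht : 1 ≤ t)
    (M r : ℤ) (hM : 2 ≤ M) (hsqf : Squarefree M) (hr : 1 ≤ r)
    (heq : (p : ℤ) ^ 4 * t ^ 2 - 4 * s = M * r ^ 2)
    (hnotpow : ¬∃ u v : ℤ, (u ^ 2 - M * v ^ 2 = 4 ∨ u ^ 2 - M * v ^ 2 = -4) ∧
      (((u : ℝ) + (v : ℝ) * Real.sqrt M) / 2) ^ p =
        ((p : ℝ) ^ 2 * (t : ℝ) + (r : ℝ) * Real.sqrt M) / 2) :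
    ∀ (F : IntermediateField ℚ ℂ) [NumberField F],
      F = IntermediateField.adjoin ℚ
        {(Complex.exp (2 * Real.pi * Complex.I / p) -
            (Complex.exp (2 * Real.pi * Complex.I / p))⁻¹) *
          ((Real.sqrt (M : ℝ) : ℝ) : ℂ)} →
      p ∣ NumberField.classNumber F := by
  intro F _ hF
  refine p_divides_class_number_of_mirror_field_general (T := p ^ 2 * t) (r := r) hp (by omega) hs
    (dvd_mul_right _ _) hM hsqf (by linear_combination heq) ?_
    (Complex.isPrimitiveRoot_exp p hp.ne_zero) F hF
  rintro ⟨u, v, huv, hpow⟩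
  exact hnotpow ⟨u, v, by rcases hs with rfl | rfl <;> omega, by simpa using hpow⟩
end
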